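/- arXiv:1805.03382 — 5 statements merged into one kernel-verified Lean document; each statement's English description precedes it below -/
import Mathlib

section
/- For every menu M on [0,1]^2 with at most 3 items (including the zero item ((0,0),0)), the revenue of M under the uniform distribution on [0,1]^2 is at most 59/108. -/
open MeasureTheory Real

noncomputable section

/-- Utility of a buyer with value `v = (v₁, v₂)` for a menu item
`it = ((x₁, x₂), p)`, namely `v₁ * x₁ + v₂ * x₂ - p`. -/
def util (v : ℝ × ℝ) (it : (ℝ × ℝ) × ℝ) : ℝ :=
  v.1 * it.1.1 + v.2 * it.1.2 - it.2

/-- `M` is a menu: every item has allocation in `[0,1]²` and nonnegative price,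
and the zero item `((0,0),0)` belongs to `M`. -/
def IsMenu (M : Finset ((ℝ × ℝ) × ℝ)) : Prop :=
  (((0 : ℝ), (0 : ℝ)), (0 : ℝ)) ∈ M ∧
    ∀ it ∈ M, it.1.1 ∈ Set.Icc (0 : ℝ) 1 ∧ it.1.2 ∈ Set.Icc (0 : ℝ) 1 ∧ 0 ≤ it.2

/-- The price paid by a buyer with value `v`: the highest price among the
utility-maximizing menu items of `M`. -/
def buyerPrice (M : Finset ((ℝ × ℝ) × ℝ)) (v : ℝ × ℝ) : ℝ :=
  sSup {p : ℝ | ∃ it ∈ M, it.2 = p ∧ ∀ it' ∈ M, util v it' ≤ util v it}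

/-- Revenue of the menu `M` under the uniform distribution on `[0,1]²`. -/
def rev (M : Finset ((ℝ × ℝ) × ℝ)) : ℝ :=
  ∫ v in Set.Icc ((0 : ℝ), (0 : ℝ)) ((1 : ℝ), (1 : ℝ)), buyerPrice M v

/-!
Let `u` be the utility that the menu leaves to the buyers. Scaling all values by `t > 1` and letting
`t → 1` bounds the revenue by `∫ u (1, y) dy + ∫ u (x, 1) dx - 3 ∬ u`. On each horizontal slice,
nonnegativity and the slope bounds of `u` give a lower bound for `∫ u (x, y) dx` in terms of the
fraction of buyers served there, and every choice of these fractions yields an upper bound for the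
revenue; those of the optimal menu `{((0, 0), 0), ((1, 0), 2 / 3), ((1, 1), 5 / 6)}` yield
`59 / 108`.

Let `a`, `b` be the items besides the zero item, with `b` preferred at `(1, 1)`. If no item is worth
buying at one of the corners `(0, 1)`, `(1, 0)`, the fractions `1 / 3 + y ^ 2 / 2` suffice. If `b`
is preferred at one of these corners, the fractions of the optimal menu suffice, after a correction
that uses the convexity of `u` along an edge. Otherwise `u` is the sum of the utilities of selling
`a` and the upgrade `b - a` separately, and each summand is bounded as before.
-/

section IntegralEstimates

lemma integral_quartic (a b c₀ c₁ c₂ c₃ c₄ : ℝ) :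
    ∫ x in a..b, (c₀ + c₁ * x + c₂ * x ^ 2 + c₃ * x ^ 3 + c₄ * x ^ 4) =
      c₀ * (b - a) + c₁ * ((b ^ 2 - a ^ 2) / 2) + c₂ * ((b ^ 3 - a ^ 3) / 3) +
        c₃ * ((b ^ 4 - a ^ 4) / 4) + c₄ * ((b ^ 5 - a ^ 5) / 5) := by
  have int_monomial (c : ℝ) (n : ℕ) :
      IntervalIntegrable (fun x : ℝ ↦ c * x ^ n) volume a b :=
    Continuous.intervalIntegrable (by fun_prop) a b
  have sum_eq : ∀ x : ℝ, c₀ + c₁ * x + c₂ * x ^ 2 + c₃ * x ^ 3 + c₄ * x ^ 4 =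
      ∑ i : Fin 5, ![c₀, c₁, c₂, c₃, c₄] i * x ^ (i : ℕ) := fun x ↦ by
    simp [Fin.sum_univ_five]
  simp_rw [sum_eq]
  rw [intervalIntegral.integral_finsetSum fun i _ ↦ int_monomial _ _]
  simp only [intervalIntegral.integral_const_mul, integral_pow, Fin.sum_univ_five]
  norm_num
  rfl

lemma integral_le_of_convexOn {f : ℝ → ℝ} {a b : ℝ} (hab : a ≤ b)
    (hf : ConvexOn ℝ (Set.Icc a b) f) (hint : IntervalIntegrable f volume a b) :
    ∫ x in a..b, f x ≤ (b - a) * ((f a + f b) / 2) := by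
  have reflect_add_le : ∀ x ∈ Set.Icc a b, f x + f (a + b - x) ≤ f a + f b := by
    intro x hx
    obtain ⟨s, t, hs, ht, hst, rfl⟩ : x ∈ segment ℝ a b := (segment_eq_Icc hab).symm ▸ hx
    have hreflect : a + b - (s • a + t • b) = t • a + s • b := by
      simp only [smul_eq_mul]
      linear_combination (-a - b) * hst
    have hle := hf.2 (Set.left_mem_Icc.2 hab) (Set.right_mem_Icc.2 hab) hs ht hst
    have hle' := hf.2 (Set.left_mem_Icc.2 hab) (Set.right_mem_Icc.2 hab) ht hs (by linarith)
    rw [hreflect]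
    calc f (s • a + t • b) + f (t • a + s • b)
        ≤ (s • f a + t • f b) + (t • f a + s • f b) := add_le_add hle hle'
      _ = f a + f b := by
        simp only [smul_eq_mul]
        linear_combination (f a + f b) * hst
  have integral_reflect : ∫ x in a..b, f (a + b - x) = ∫ x in a..b, f x := by
    rw [intervalIntegral.integral_comp_sub_left, add_sub_cancel_right, add_sub_cancel_left]
  have hint' : IntervalIntegrable (fun x ↦ f (a + b - x)) volume a b := by
    simpa using (hint.comp_sub_left (a + b)).symm
  have hmono := intervalIntegral.integral_mono_on hab (hint.add hint')
    intervalIntegrable_const reflect_add_le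
  rw [intervalIntegral.integral_add hint hint', integral_reflect,
    intervalIntegral.integral_const, smul_eq_mul] at hmono
  linarith

lemma integral_le_add_of_monotone {f : ℝ → ℝ} (hf : Monotone f) (a : ℝ) {b c : ℝ} (hbc : b ≤ c) :
    ∫ x in a..c, f x ≤ (∫ x in a..b, f x) + (c - b) * f c := by
  rw [← intervalIntegral.integral_add_adjacent_intervals (hf.intervalIntegrable (b := b))
    hf.intervalIntegrable]
  gcongr
  calc ∫ x in b..c, f x
      ≤ ∫ _ in b..c, f c := intervalIntegral.integral_mono_on hbc hf.intervalIntegrable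
        intervalIntegrable_const fun x hx ↦ hf hx.2
    _ = (c - b) * f c := by simp

lemma le_integral_of_linear_le {f : ℝ → ℝ} {m c s : ℝ} (hf : Continuous f) (hnonneg : ∀ x, 0 ≤ f x)
    (hle : ∀ x ∈ Set.Icc (0 : ℝ) 1, m - c * (1 - x) ≤ f x) (hs : s ∈ Set.Icc (0 : ℝ) 1) :
    s * m - c * s ^ 2 / 2 ≤ ∫ x in (0 : ℝ)..1, f x := by
  have hint (a b : ℝ) : IntervalIntegrable f volume a b := hf.intervalIntegrable a b
  calc s * m - c * s ^ 2 / 2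
      = ∫ x in (1 - s)..1, (m - c + c * x + 0 * x ^ 2 + 0 * x ^ 3 + 0 * x ^ 4) := by
        rw [integral_quartic]
        ring
    _ ≤ ∫ x in (1 - s)..1, f x :=
        intervalIntegral.integral_mono_on (by linarith [hs.1])
          (Continuous.intervalIntegrable (by fun_prop) _ _) (hint _ _) fun x hx ↦ by
            linarith [hle x ⟨by linarith [hx.1, hs.2], hx.2⟩]
    _ ≤ (∫ x in (0 : ℝ)..(1 - s), f x) + ∫ x in (1 - s)..1, f x :=
        le_add_of_nonneg_left <|
          intervalIntegral.integral_nonneg (by linarith [hs.2]) fun x _ ↦ hnonneg x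
    _ = ∫ x in (0 : ℝ)..1, f x :=
        intervalIntegral.integral_add_adjacent_intervals (hint _ _) (hint _ _)

lemma integral_le_of_le_test {f s : ℝ → ℝ} (hf : Continuous f) (hs : Continuous s)
    {a b p q r e : ℝ} (hab : a ≤ b)
    (hle : ∀ y ∈ Set.Icc a b,
      f y ≤ p * (3 * s y - 1) + q * ((3 * s y - 1) * (1 - y)) + r * s y ^ 2 + e * (1 - y)) :
    ∫ y in a..b, f y ≤ p * (∫ y in a..b, (3 * s y - 1)) +
      q * (∫ y in a..b, (3 * s y - 1) * (1 - y)) + r * (∫ y in a..b, s y ^ 2) +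
      e * (((1 - a) ^ 2 - (1 - b) ^ 2) / 2) := by
  have hint {g : ℝ → ℝ} (hg : Continuous g) : IntervalIntegrable g volume a b :=
    hg.intervalIntegrable a b
  have hlinear : ∫ y in a..b, (1 - y) = ((1 - a) ^ 2 - (1 - b) ^ 2) / 2 := by
    rw [intervalIntegral.integral_comp_sub_left (fun y ↦ y), integral_id]
  have hmono := intervalIntegral.integral_mono_on hab (hint hf) (hint (by fun_prop)) hle
  rw [intervalIntegral.integral_add (hint (by fun_prop)) (hint (by fun_prop)),
    intervalIntegral.integral_add (hint (by fun_prop)) (hint (by fun_prop)),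
    intervalIntegral.integral_add (hint (by fun_prop)) (hint (by fun_prop))] at hmono
  simpa only [intervalIntegral.integral_const_mul, hlinear] using hmono

lemma exists_chord_slope_of_convexOn {f : ℝ → ℝ} (hf : ConvexOn ℝ Set.univ f) {j b : ℝ}
    (hjb : j < b) :
    ∃ α, f j = f b - α * (b - j) ∧ (∀ y ≤ j, f b - α * (b - y) ≤ f y) ∧
      ∀ y ∈ Set.Icc j b, f y ≤ f b - α * (b - y) := by
  refine ⟨(f j - f b) / (j - b), by grind, fun y hy ↦ ?_, fun y hy ↦ ?_⟩
  · have hyb : y < b := hy.trans_lt hjb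
    have := hf.secant_mono (Set.mem_univ b) (Set.mem_univ y) (Set.mem_univ j) hyb.ne hjb.ne hy
    rw [div_le_iff_of_neg (sub_neg.2 hyb)] at this
    linarith
  · rcases hy.2.eq_or_lt with rfl | hyb
    · simp
    have := hf.secant_mono (Set.mem_univ b) (Set.mem_univ j) (Set.mem_univ y) hjb.ne hyb.ne hy.1
    rw [le_div_iff_of_neg (sub_neg.2 hyb)] at this
    linarith

lemma setIntegral_Icc_comp_swap (u : ℝ × ℝ → ℝ) :
    ∫ v in Set.Icc (0 : ℝ × ℝ) 1, u v.swap = ∫ v in Set.Icc (0 : ℝ × ℝ) 1, u v := by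
  have hsquare : Set.Icc (0 : ℝ × ℝ) 1 = Set.Icc (0 : ℝ) 1 ×ˢ Set.Icc (0 : ℝ) 1 :=
    (Set.Icc_prod_Icc 0 1 0 1).symm
  rw [hsquare, Measure.volume_eq_prod, setIntegral_prod_swap]

lemma setIntegral_Icc_eq_integral_integral {u : ℝ × ℝ → ℝ} (hu : Continuous u) :
    ∫ v in Set.Icc (0 : ℝ × ℝ) 1, u v = ∫ y in (0 : ℝ)..1, ∫ x in (0 : ℝ)..1, u (x, y) := by
  have hsquare : Set.Icc (0 : ℝ × ℝ) 1 = Set.Icc (0 : ℝ) 1 ×ˢ Set.Icc (0 : ℝ) 1 :=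
    (Set.Icc_prod_Icc 0 1 0 1).symm
  have hint : IntegrableOn (fun v : ℝ × ℝ ↦ u v.swap) (Set.Icc (0 : ℝ) 1 ×ˢ Set.Icc (0 : ℝ) 1)
      (volume.prod volume) :=
    (hu.comp continuous_swap).continuousOn.integrableOn_compact (isCompact_Icc.prod isCompact_Icc)
  rw [← setIntegral_Icc_comp_swap, hsquare, Measure.volume_eq_prod, setIntegral_prod _ hint]
  simp only [intervalIntegral.integral_of_le zero_le_one, integral_Icc_eq_integral_Ioc,
    Prod.swap_prod_mk]

end IntegralEstimates

section ServedFraction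

/-- The fraction of the buyers with second value `y` that purchase something from the optimal menu
`{((0, 0), 0), ((1, 0), 2 / 3), ((1, 1), 5 / 6)}`. -/
def servedFraction (y : ℝ) : ℝ :=
  max (1 / 3) (min (y + 1 / 6) 1)

lemma continuous_servedFraction : Continuous servedFraction := by
  unfold servedFraction
  fun_prop

lemma servedFraction_mem_Icc (y : ℝ) : servedFraction y ∈ Set.Icc (1 / 3) 1 :=
  ⟨le_max_left _ _, max_le (by norm_num) (min_le_right _ _)⟩

lemma servedFraction_eq_one_third {y : ℝ} (hy : y ≤ 1 / 6) : servedFraction y = 1 / 3 :=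
  max_eq_left ((min_le_left _ _).trans (by linarith))

lemma servedFraction_eq_add {y : ℝ} (hy : 1 / 6 ≤ y) (hy' : y ≤ 5 / 6) :
    servedFraction y = y + 1 / 6 := by
  rw [servedFraction, min_eq_left (by linarith), max_eq_right (by linarith)]

lemma servedFraction_eq_one {y : ℝ} (hy : 5 / 6 ≤ y) : servedFraction y = 1 := by
  rw [servedFraction, min_eq_right (by linarith), max_eq_right (by norm_num)]

variable {F : ℝ → ℝ → ℝ} {j : ℝ}

lemma intervalIntegrable_comp_servedFraction (hF : Continuous (Function.uncurry F)) (a b : ℝ) :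
    IntervalIntegrable (fun y ↦ F (servedFraction y) y) volume a b :=
  (hF.comp (continuous_servedFraction.prodMk continuous_id)).intervalIntegrable a b

lemma integral_comp_servedFraction_zero_left (hF : Continuous (Function.uncurry F))
    (hj : j ∈ Set.Icc (1 / 6) (5 / 6)) :
    ∫ y in (0 : ℝ)..j, F (servedFraction y) y =
      (∫ y in (0 : ℝ)..(1 / 6), F (1 / 3) y) + ∫ y in (1 / 6)..j, F (y + 1 / 6) y := by
  have hint := intervalIntegrable_comp_servedFraction hF
  rw [← intervalIntegral.integral_add_adjacent_intervals (hint 0 (1 / 6)) (hint (1 / 6) j)]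
  congr 1 <;> refine intervalIntegral.integral_congr fun y hy ↦ ?_
  · rw [Set.uIcc_of_le (by norm_num)] at hy
    simp only [servedFraction_eq_one_third hy.2]
  · rw [Set.uIcc_of_le hj.1] at hy
    simp only [servedFraction_eq_add hy.1 (hy.2.trans hj.2)]

lemma integral_comp_servedFraction_one_right (hF : Continuous (Function.uncurry F))
    (hj : j ∈ Set.Icc (1 / 6) (5 / 6)) :
    ∫ y in j..1, F (servedFraction y) y =
      (∫ y in j..(5 / 6), F (y + 1 / 6) y) + ∫ y in (5 / 6)..1, F 1 y := by
  have hint := intervalIntegrable_comp_servedFraction hF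
  rw [← intervalIntegral.integral_add_adjacent_intervals (hint j (5 / 6)) (hint (5 / 6) 1)]
  congr 1 <;> refine intervalIntegral.integral_congr fun y hy ↦ ?_
  · rw [Set.uIcc_of_le hj.2] at hy
    simp only [servedFraction_eq_add (hj.1.trans hy.1) hy.2]
  · rw [Set.uIcc_of_le (by norm_num)] at hy
    simp only [servedFraction_eq_one hy.1]

lemma integral_comp_servedFraction (hF : Continuous (Function.uncurry F)) :
    ∫ y in (0 : ℝ)..1, F (servedFraction y) y =
      (∫ y in (0 : ℝ)..(1 / 6), F (1 / 3) y) + (∫ y in (1 / 6)..(5 / 6), F (y + 1 / 6) y) +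
        ∫ y in (5 / 6)..1, F 1 y := by
  have hint := intervalIntegrable_comp_servedFraction hF
  rw [← intervalIntegral.integral_add_adjacent_intervals (hint 0 (5 / 6)) (hint (5 / 6) 1),
    integral_comp_servedFraction_zero_left hF (by norm_num),
    integral_comp_servedFraction_one_right hF (by norm_num), intervalIntegral.integral_same,
    zero_add]

lemma integral_three_mul_servedFraction_sub_one :
    ∫ y in (0 : ℝ)..1, (3 * servedFraction y - 1) = 1 := by
  have hmiddle : ∫ y in (1 / 6 : ℝ)..(5 / 6), (3 * (y + 1 / 6) - 1) = 2 / 3 := by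
    convert integral_quartic (1 / 6) (5 / 6) (-1 / 2) 3 0 0 0 using 3 <;> ring
  rw [integral_comp_servedFraction (F := fun s _ ↦ 3 * s - 1) (by fun_prop), hmiddle]
  norm_num

lemma integral_moment_add_one_sixth (a b : ℝ) : ∫ y in a..b, (3 * (y + 1 / 6) - 1) * (1 - y) =
    -1 / 2 * (b - a) + 7 / 4 * (b ^ 2 - a ^ 2) - (b ^ 3 - a ^ 3) := by
  convert integral_quartic a b (-1 / 2) (7 / 2) (-3) 0 0 using 3 <;> ring

lemma integral_zero_left_moment_servedFraction :
    ∫ y in (0 : ℝ)..(7 / 12), (3 * servedFraction y - 1) * (1 - y) = 125 / 864 := by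
  rw [integral_comp_servedFraction_zero_left (F := fun s y ↦ (3 * s - 1) * (1 - y)) (by fun_prop)
    (by norm_num), integral_moment_add_one_sixth]
  norm_num

lemma integral_moment_servedFraction :
    ∫ y in (0 : ℝ)..1, (3 * servedFraction y - 1) * (1 - y) = 31 / 108 := by
  have hright : ∫ y in (5 / 6 : ℝ)..1, (3 * 1 - 1) * (1 - y) = 1 / 36 := by
    convert integral_quartic (5 / 6) 1 2 (-2) 0 0 0 using 3 <;> ring
  rw [integral_comp_servedFraction (F := fun s y ↦ (3 * s - 1) * (1 - y)) (by fun_prop),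
    integral_moment_add_one_sixth, hright]
  norm_num

lemma integral_one_right_servedFraction_sq :
    ∫ y in (7 / 12 : ℝ)..1, servedFraction y ^ 2 = 23 / 64 := by
  rw [integral_comp_servedFraction_one_right (F := fun s _ ↦ s ^ 2) (by fun_prop) (by norm_num),
    intervalIntegral.integral_comp_add_right (fun y ↦ y ^ 2)]
  norm_num

lemma integral_servedFraction_sq : ∫ y in (0 : ℝ)..1, servedFraction y ^ 2 = 41 / 81 := by
  rw [integral_comp_servedFraction (F := fun s _ ↦ s ^ 2) (by fun_prop),
    intervalIntegral.integral_comp_add_right (fun y ↦ y ^ 2)]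
  norm_num

end ServedFraction

section RevenueFunctional

/-- The revenue of a mechanism under the uniform distribution on `[0,1]²`, as a function of the
utility `u` it leaves to the buyers: the integral of `⟪v, ∇ u v⟫ - u v` over the square,
integrated by parts so that no derivative of `u` is needed. -/
def revenueFunctional (u : ℝ × ℝ → ℝ) : ℝ :=
  (∫ y in (0 : ℝ)..1, u (1, y)) + (∫ x in (0 : ℝ)..1, u (x, 1)) -
    3 * ∫ v in Set.Icc (0 : ℝ × ℝ) 1, u v

variable {u w : ℝ × ℝ → ℝ}

lemma continuous_integral_slice (hu : Continuous u) :
    Continuous fun y ↦ ∫ x in (0 : ℝ)..1, u (x, y) :=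
  intervalIntegral.continuous_parametric_intervalIntegral_of_continuous'
    (f := fun y x ↦ u (x, y)) (by fun_prop) 0 1

/-- The contribution of the buyers with second value `y` to `revenueFunctional u`, not counting
the top edge of the square. -/
def sliceRevenue (u : ℝ × ℝ → ℝ) (y : ℝ) : ℝ :=
  u (1, y) - 3 * ∫ x in (0 : ℝ)..1, u (x, y)

lemma continuous_sliceRevenue (hu : Continuous u) : Continuous (sliceRevenue u) := by
  have hedge : Continuous fun y ↦ u (1, y) := by fun_prop
  exact hedge.sub ((continuous_integral_slice hu).const_mul 3)

lemma revenueFunctional_eq_integral_sliceRevenue (hu : Continuous u) :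
    revenueFunctional u =
      (∫ x in (0 : ℝ)..1, u (x, 1)) + ∫ y in (0 : ℝ)..1, sliceRevenue u y := by
  simp only [sliceRevenue]
  rw [revenueFunctional, setIntegral_Icc_eq_integral_integral hu, intervalIntegral.integral_sub
    (Continuous.intervalIntegrable (by fun_prop) _ _)
    (((continuous_integral_slice hu).const_mul 3).intervalIntegrable _ _),
    intervalIntegral.integral_const_mul]
  ring

lemma revenueFunctional_comp_swap (u : ℝ × ℝ → ℝ) :
    revenueFunctional (u ∘ Prod.swap) = revenueFunctional u := by
  simp only [revenueFunctional, Function.comp_apply, Prod.swap_prod_mk, setIntegral_Icc_comp_swap]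
  ring

lemma revenueFunctional_add (hu : Continuous u) (hw : Continuous w) :
    revenueFunctional (u + w) = revenueFunctional u + revenueFunctional w := by
  have hint {f : ℝ → ℝ} (hf : Continuous f) : IntervalIntegrable f volume 0 1 :=
    hf.intervalIntegrable 0 1
  have hint_square {f : ℝ × ℝ → ℝ} (hf : Continuous f) :
      IntegrableOn f (Set.Icc (0 : ℝ × ℝ) 1) :=
    hf.continuousOn.integrableOn_compact isCompact_Icc
  simp only [revenueFunctional, Pi.add_apply]
  rw [intervalIntegral.integral_add (hint (by fun_prop)) (hint (by fun_prop)),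
    intervalIntegral.integral_add (hint (by fun_prop)) (hint (by fun_prop)),
    integral_add (hint_square hu) (hint_square hw)]
  ring

lemma revenueFunctional_congr (h : Set.EqOn u w (Set.Icc 0 1)) :
    revenueFunctional u = revenueFunctional w := by
  have hmem {x y : ℝ} (hx : x ∈ Set.uIcc (0 : ℝ) 1) (hy : y ∈ Set.uIcc (0 : ℝ) 1) :
      ((x, y) : ℝ × ℝ) ∈ Set.Icc (0 : ℝ × ℝ) 1 := by
    rw [Set.uIcc_of_le zero_le_one] at hx hy
    exact ⟨⟨hx.1, hy.1⟩, ⟨hx.2, hy.2⟩⟩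
  simp only [revenueFunctional]
  rw [setIntegral_congr_fun measurableSet_Icc h,
    intervalIntegral.integral_congr fun y hy ↦ h (hmem Set.right_mem_uIcc hy),
    intervalIntegral.integral_congr fun x hx ↦ h (hmem hx Set.right_mem_uIcc)]

/-- The properties of an indirect utility that the revenue bounds rely on: it is continuous,
nonnegative and convex, and it increases at rate at most `c₁`, `c₂` in the two coordinates.
For a menu, `c₁` and `c₂` bound the amounts of the two goods that are on offer. -/
structure IsIndirectUtility (u : ℝ × ℝ → ℝ) (c₁ c₂ : ℝ) : Prop where
  continuous : Continuous u
  nonneg : ∀ v, 0 ≤ u v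
  convexOn : ConvexOn ℝ Set.univ u
  le_add : ∀ v w, v ≤ w → u w ≤ u v + c₁ * (w.1 - v.1) + c₂ * (w.2 - v.2)

namespace IsIndirectUtility

variable {c₁ c₂ : ℝ}

lemma swap (hu : IsIndirectUtility u c₁ c₂) : IsIndirectUtility (u ∘ Prod.swap) c₂ c₁ where
  continuous := hu.continuous.comp continuous_swap
  nonneg v := hu.nonneg v.swap
  convexOn := hu.convexOn.comp_linearMap (LinearEquiv.prodComm ℝ ℝ ℝ).toLinearMap
  le_add v w hvw := by
    have := hu.le_add v.swap w.swap (Prod.swap_le_swap.2 hvw)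
    simp only [Prod.fst_swap, Prod.snd_swap] at this
    simp only [Function.comp_apply]
    linarith

lemma convexOn_right (hu : IsIndirectUtility u c₁ c₂) (x : ℝ) :
    ConvexOn ℝ Set.univ fun y ↦ u (x, y) := by
  refine ⟨convex_univ, fun y _ z _ a b ha hb hab ↦ ?_⟩
  have hcomb : a • ((x, y) : ℝ × ℝ) + b • (x, z) = (x, a • y + b • z) := by
    rw [Prod.smul_mk, Prod.smul_mk, Prod.mk_add_mk, ← add_smul, hab, one_smul]
  have hle := hu.convexOn.2 (Set.mem_univ (x, y)) (Set.mem_univ (x, z)) ha hb hab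
  rwa [hcomb] at hle

lemma sub_le_left (hu : IsIndirectUtility u c₁ c₂) {x : ℝ} (hx : x ≤ 1) (y : ℝ) :
    u (1, y) - c₁ * (1 - x) ≤ u (x, y) := by
  have := hu.le_add (x, y) (1, y) ⟨hx, le_rfl⟩
  simp only [sub_self, mul_zero, add_zero] at this
  linarith

lemma sub_le_right (hu : IsIndirectUtility u c₁ c₂) (x : ℝ) {y : ℝ} (hy : y ≤ 1) :
    u (x, 1) - c₂ * (1 - y) ≤ u (x, y) := by
  simpa using hu.swap.sub_le_left hy x

lemma integral_top_le (hu : IsIndirectUtility u c₁ c₂) :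
    ∫ x in (0 : ℝ)..1, u (x, 1) ≤ (u (0, 1) + u (1, 1)) / 2 := by
  have hconvex : ConvexOn ℝ (Set.Icc 0 1) fun x ↦ u (x, 1) :=
    (hu.swap.convexOn_right 1).subset (Set.subset_univ _) (convex_Icc 0 1)
  have hcont := hu.continuous
  have := integral_le_of_convexOn zero_le_one hconvex
    (Continuous.intervalIntegrable (by fun_prop) 0 1)
  linarith

variable {s : ℝ → ℝ}

lemma sliceRevenue_le (hu : IsIndirectUtility u c₁ c₂) {m t y : ℝ} (ht : t ∈ Set.Icc (1 / 3) 1)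
    (hm : m ≤ u (1, y)) :
    sliceRevenue u y ≤ -m * (3 * t - 1) + 3 / 2 * c₁ * t ^ 2 := by
  have hcont := hu.continuous
  have hmass : t * u (1, y) - c₁ * t ^ 2 / 2 ≤ ∫ x in (0 : ℝ)..1, u (x, y) :=
    le_integral_of_linear_le (by fun_prop) (fun x ↦ hu.nonneg (x, y))
      (fun x hx ↦ hu.sub_le_left hx.2 y) ⟨by linarith [ht.1], ht.2⟩
  have hend := mul_le_mul_of_nonneg_left hm (by linarith [ht.1] : 0 ≤ 3 * t - 1)
  rw [sliceRevenue]
  linarith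

/-- Weak duality: on each horizontal slice the utility of the top fraction `s y` of the buyers is
replaced by its linear minorant, and that of the others by `0`. Equality holds when these are
exactly the buyers that purchase something. -/
lemma revenueFunctional_le (hu : IsIndirectUtility u c₁ c₂) (hs : Continuous s)
    (hs_mem : ∀ y ∈ Set.Icc (0 : ℝ) 1, s y ∈ Set.Icc (1 / 3) 1) :
    revenueFunctional u ≤ (∫ x in (0 : ℝ)..1, u (x, 1)) -
      u (1, 1) * (∫ y in (0 : ℝ)..1, (3 * s y - 1)) +
      c₂ * (∫ y in (0 : ℝ)..1, (3 * s y - 1) * (1 - y)) +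
      3 / 2 * c₁ * ∫ y in (0 : ℝ)..1, s y ^ 2 := by
  have hslices := integral_le_of_le_test (continuous_sliceRevenue hu.continuous) hs
    (p := -u (1, 1)) (q := c₂) (r := 3 / 2 * c₁) (e := 0) zero_le_one fun y hy ↦ by
      linarith [hu.sliceRevenue_le (hs_mem y hy) (hu.sub_le_right 1 hy.2)]
  rw [revenueFunctional_eq_integral_sliceRevenue hu.continuous]
  linarith

lemma revenueFunctional_le_of_apply_zero_one_eq_zero (hu : IsIndirectUtility u c₁ c₂)
    (hzero : u (0, 1) = 0) : revenueFunctional u ≤ 49 / 120 * c₁ + 1 / 8 * c₂ := by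
  have hquadratic : ∀ y ∈ Set.Icc (0 : ℝ) 1, 1 / 3 + y ^ 2 / 2 ∈ Set.Icc (1 / 3 : ℝ) 1 :=
    fun y hy ↦ ⟨by nlinarith, by nlinarith [hy.1, hy.2]⟩
  have hbound := hu.revenueFunctional_le (by fun_prop) hquadratic
  have hmass : ∫ y in (0 : ℝ)..1, (3 * (1 / 3 + y ^ 2 / 2) - 1) = 1 / 2 := by
    convert integral_quartic 0 1 0 0 (3 / 2) 0 0 using 3 <;> ring
  have hmoment : ∫ y in (0 : ℝ)..1, (3 * (1 / 3 + y ^ 2 / 2) - 1) * (1 - y) = 1 / 8 := by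
    convert integral_quartic 0 1 0 0 (3 / 2) (-3 / 2) 0 using 3 <;> ring
  have hsquare : ∫ y in (0 : ℝ)..1, (1 / 3 + y ^ 2 / 2) ^ 2 = 49 / 180 := by
    convert integral_quartic 0 1 (1 / 9) 0 (1 / 3) 0 (1 / 4) using 3 <;> ring
  have htop := hu.integral_top_le
  rw [hmass, hmoment, hsquare] at hbound
  linarith

lemma revenueFunctional_le_of_corners_eq_zero (hu : IsIndirectUtility u c₁ c₂)
    (hzero_one : u (0, 1) = 0) (hone_zero : u (1, 0) = 0) :
    revenueFunctional u ≤ 4 / 15 * (c₁ + c₂) := by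
  have hbound := hu.revenueFunctional_le_of_apply_zero_one_eq_zero hzero_one
  have hbound_swap := hu.swap.revenueFunctional_le_of_apply_zero_one_eq_zero hone_zero
  rw [revenueFunctional_comp_swap] at hbound_swap
  linarith

lemma revenueFunctional_le_of_apply_zero_one_le (hu : IsIndirectUtility u c₁ c₂)
    (hle : u (0, 1) ≤ u (1, 1) - c₁) :
    revenueFunctional u ≤ 28 / 108 * c₁ + 31 / 108 * c₂ := by
  have hbound := hu.revenueFunctional_le continuous_servedFraction
    fun y _ ↦ servedFraction_mem_Icc y
  have htop := hu.integral_top_le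
  rw [integral_three_mul_servedFraction_sub_one, integral_moment_servedFraction,
    integral_servedFraction_sq] at hbound
  linarith

lemma revenueFunctional_le_of_corners_le (hu : IsIndirectUtility u c₁ c₂)
    (hzero_one : u (0, 1) ≤ u (1, 1) - c₁) (hone_zero : u (1, 0) ≤ u (1, 1) - c₂) :
    revenueFunctional u ≤ 59 / 216 * (c₁ + c₂) := by
  have hbound := hu.revenueFunctional_le_of_apply_zero_one_le hzero_one
  have hbound_swap := hu.swap.revenueFunctional_le_of_apply_zero_one_le hone_zero
  rw [revenueFunctional_comp_swap] at hbound_swap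
  linarith

variable {b j : ℝ}

/-- Here `1 - ε` is the slope of the chord of `u (1, ·)` over `[j, 1]`. By convexity, `ε > 0` raises
the right edge only above `j`, and it steepens the linear minorant below `j`. -/
lemma exists_revenueFunctional_le_of_linear_minorant (hu : IsIndirectUtility u 1 1)
    (hs : Continuous s) (hs_mem : ∀ y ∈ Set.Icc (0 : ℝ) 1, s y ∈ Set.Icc (1 / 3) 1)
    (hj : j ∈ Set.Ico (0 : ℝ) 1)
    (hminorant : ∀ x ∈ Set.Icc (0 : ℝ) 1, ∀ y ∈ Set.Icc (0 : ℝ) 1,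
      u (1, 1) - (1 - y) - b * (1 - x) ≤ u (x, y)) :
    ∃ ε ≥ 0, revenueFunctional u ≤ (∫ x in (0 : ℝ)..1, u (x, 1)) -
      u (1, 1) * (∫ y in (0 : ℝ)..1, (3 * s y - 1)) +
      (∫ y in (0 : ℝ)..1, (3 * s y - 1) * (1 - y)) +
      3 / 2 * (∫ y in (0 : ℝ)..j, s y ^ 2) + 3 / 2 * b * (∫ y in j..1, s y ^ 2) +
      ε * ((1 - j) ^ 2 / 2 - ∫ y in (0 : ℝ)..j, (3 * s y - 1) * (1 - y)) := by
  have hcont := hu.continuous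
  have hslice_cont := continuous_sliceRevenue hcont
  obtain ⟨α, hα, hbelow, habove⟩ := exists_chord_slope_of_convexOn (hu.convexOn_right 1) hj.2
  have hα_le : α ≤ 1 := by
    have := hu.sub_le_right 1 hj.2.le
    exact le_of_mul_le_mul_right (by linarith) (sub_pos.2 hj.2)
  have hlower := integral_le_of_le_test hslice_cont hs (p := -u (1, 1)) (q := α) (r := 3 / 2)
    (e := 0) hj.1 fun y hy ↦ by
      linarith [hu.sliceRevenue_le (hs_mem y ⟨hy.1, hy.2.trans hj.2.le⟩) (hbelow y hy.2)]
  have hupper := integral_le_of_le_test hslice_cont hs (p := -u (1, 1)) (q := 1)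
    (r := 3 / 2 * b) (e := 1 - α) hj.2.le fun y hy ↦ by
      have hy' : y ∈ Set.Icc (0 : ℝ) 1 := ⟨hj.1.trans hy.1, hy.2⟩
      have hmass := le_integral_of_linear_le (f := fun x ↦ u (x, y)) (by fun_prop)
        (fun x ↦ hu.nonneg (x, y)) (fun x hx ↦ hminorant x hx y hy')
        ⟨by linarith [(hs_mem y hy').1], (hs_mem y hy').2⟩
      rw [sliceRevenue]
      linarith [habove y hy]
  have hsplit {f : ℝ → ℝ} (hf : Continuous f) :=
    intervalIntegral.integral_add_adjacent_intervals (hf.intervalIntegrable 0 j)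
      (hf.intervalIntegrable j 1) (μ := volume)
  refine ⟨1 - α, sub_nonneg.2 hα_le, ?_⟩
  rw [revenueFunctional_eq_integral_sliceRevenue hcont, ← hsplit hslice_cont,
    ← hsplit (f := fun y ↦ 3 * s y - 1) (by fun_prop),
    ← hsplit (f := fun y ↦ (3 * s y - 1) * (1 - y)) (by fun_prop)]
  linarith

lemma revenueFunctional_le_of_linear_minorant (hu : IsIndirectUtility u 1 1) (hb : b ≤ 1)
    (hminorant : ∀ x ∈ Set.Icc (0 : ℝ) 1, ∀ y ∈ Set.Icc (0 : ℝ) 1,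
      u (1, 1) - (1 - y) - b * (1 - x) ≤ u (x, y))
    (hzero_one : u (0, 1) ≤ u (1, 1) - b) : revenueFunctional u ≤ 59 / 108 := by
  obtain ⟨ε, hε, hbound⟩ := hu.exists_revenueFunctional_le_of_linear_minorant
    continuous_servedFraction (fun y _ ↦ servedFraction_mem_Icc y) (j := 7 / 12) (by norm_num)
    hminorant
  have hint (p q : ℝ) : IntervalIntegrable (fun y ↦ servedFraction y ^ 2) volume p q :=
    (continuous_servedFraction.pow 2).intervalIntegrable p q
  have hsplit := intervalIntegral.integral_add_adjacent_intervals (hint 0 (7 / 12))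
    (hint (7 / 12) 1)
  have htop := hu.integral_top_le
  rw [integral_three_mul_servedFraction_sub_one, integral_moment_servedFraction,
    integral_zero_left_moment_servedFraction, integral_one_right_servedFraction_sq] at hbound
  rw [integral_servedFraction_sq, integral_one_right_servedFraction_sq] at hsplit
  linarith

end IsIndirectUtility

end RevenueFunctional

section BuyerUtility

/-- The utility of a buyer with value `v` who chooses among the items of `N` and the outside option
`((0, 0), 0)`, which need not be listed in `N`. -/
def buyerUtility (N : Finset ((ℝ × ℝ) × ℝ)) (v : ℝ × ℝ) : ℝ :=
  (insert 0 N).sup' (Finset.insert_nonempty 0 N) (util v)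

variable {N : Finset ((ℝ × ℝ) × ℝ)} {it : (ℝ × ℝ) × ℝ} {v : ℝ × ℝ} {c c₁ c₂ : ℝ}

lemma util_zero (v : ℝ × ℝ) : util v 0 = 0 := by
  simp [util]

lemma util_sub (v : ℝ × ℝ) (a b : (ℝ × ℝ) × ℝ) : util v (b - a) = util v b - util v a := by
  simp only [util, Prod.fst_sub, Prod.snd_sub]
  ring

lemma util_swap (v : ℝ × ℝ) (it : (ℝ × ℝ) × ℝ) : util v.swap it = util v (it.1.swap, it.2) := by
  simp only [util, Prod.fst_swap, Prod.snd_swap]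
  ring

lemma util_smul (t : ℝ) (v : ℝ × ℝ) (it : (ℝ × ℝ) × ℝ) :
    util (t • v) it = t * util v it + (t - 1) * it.2 := by
  simp only [util, Prod.smul_fst, Prod.smul_snd, smul_eq_mul]
  ring

lemma util_eq_add_antidiagonal (x y : ℝ) (it : (ℝ × ℝ) × ℝ) :
    util (x, y) it = x * util (1, 0) it + (1 - x) * util (0, 1) it + (x + y - 1) * it.1.2 := by
  simp only [util]
  ring

lemma buyerUtility_le_iff : buyerUtility N v ≤ c ↔ 0 ≤ c ∧ ∀ it ∈ N, util v it ≤ c := by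
  simp only [buyerUtility, Finset.sup'_le_iff, Finset.forall_mem_insert, util_zero]

lemma util_le_buyerUtility (hit : it ∈ N) (v : ℝ × ℝ) : util v it ≤ buyerUtility N v :=
  (buyerUtility_le_iff.1 le_rfl).2 it hit

lemma buyerUtility_nonneg (N : Finset ((ℝ × ℝ) × ℝ)) (v : ℝ × ℝ) : 0 ≤ buyerUtility N v :=
  (buyerUtility_le_iff.1 le_rfl).1

lemma buyerUtility_singleton (a : (ℝ × ℝ) × ℝ) (v : ℝ × ℝ) :
    buyerUtility {a} v = max 0 (util v a) :=
  eq_of_forall_ge_iff fun c ↦ by simp [buyerUtility_le_iff]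

lemma buyerUtility_pair (a b : (ℝ × ℝ) × ℝ) (v : ℝ × ℝ) :
    buyerUtility {a, b} v = max 0 (max (util v a) (util v b)) :=
  eq_of_forall_ge_iff fun c ↦ by simp [buyerUtility_le_iff]

lemma buyerUtility_insert_zero (N : Finset ((ℝ × ℝ) × ℝ)) :
    buyerUtility (insert 0 N) = buyerUtility N :=
  funext fun v ↦ eq_of_forall_ge_iff fun c ↦ by
    simp +contextual [buyerUtility_le_iff, util_zero]

lemma continuous_buyerUtility (N : Finset ((ℝ × ℝ) × ℝ)) : Continuous (buyerUtility N) :=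
  Continuous.finset_sup'_apply _ fun it _ ↦ by
    unfold util
    fun_prop

lemma convexOn_buyerUtility (N : Finset ((ℝ × ℝ) × ℝ)) :
    ConvexOn ℝ Set.univ (buyerUtility N) := by
  refine ⟨convex_univ, fun v _ w _ s t hs ht hst ↦ buyerUtility_le_iff.2 ⟨?_, fun it hit ↦ ?_⟩⟩
  · have := buyerUtility_nonneg N
    exact add_nonneg (mul_nonneg hs (this v)) (mul_nonneg ht (this w))
  · calc util (s • v + t • w) it = s • util v it + t • util w it := by
          simp only [util, Prod.fst_add, Prod.snd_add, Prod.smul_fst, Prod.smul_snd, smul_eq_mul]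
          linear_combination it.2 * hst
      _ ≤ s • buyerUtility N v + t • buyerUtility N w := by
          gcongr <;> exact util_le_buyerUtility hit _

lemma monotone_buyerUtility (hN : ∀ it ∈ N, 0 ≤ it.1) : Monotone (buyerUtility N) := by
  refine fun v w hvw ↦ buyerUtility_le_iff.2 ⟨buyerUtility_nonneg N w, fun it hit ↦ ?_⟩
  obtain ⟨hfst, hsnd⟩ := hN it hit
  refine le_trans ?_ (util_le_buyerUtility hit w)
  exact sub_le_sub_right (add_le_add (mul_le_mul_of_nonneg_right hvw.1 hfst)
    (mul_le_mul_of_nonneg_right hvw.2 hsnd)) _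

lemma isIndirectUtility_buyerUtility (hc₁ : 0 ≤ c₁) (hc₂ : 0 ≤ c₂)
    (hN : ∀ it ∈ N, it.1 ≤ (c₁, c₂)) : IsIndirectUtility (buyerUtility N) c₁ c₂ where
  continuous := continuous_buyerUtility N
  nonneg := buyerUtility_nonneg N
  convexOn := convexOn_buyerUtility N
  le_add v w hvw := by
    have hfst := sub_nonneg.2 hvw.1
    have hsnd := sub_nonneg.2 hvw.2
    refine buyerUtility_le_iff.2 ⟨?_, fun it hit ↦ ?_⟩
    · have := buyerUtility_nonneg N v
      positivity
    · obtain ⟨hle₁, hle₂⟩ := hN it hit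
      calc util w it
          = util v it + it.1.1 * (w.1 - v.1) + it.1.2 * (w.2 - v.2) := by
            simp only [util]
            ring
        _ ≤ buyerUtility N v + c₁ * (w.1 - v.1) + c₂ * (w.2 - v.2) := by
            gcongr
            exact util_le_buyerUtility hit v

end BuyerUtility

section RevenueBound

variable {u : ℝ × ℝ → ℝ} {t : ℝ}

lemma sq_mul_integral_comp_smul (hu : Continuous u) (t : ℝ) :
    t ^ 2 * ∫ v in Set.Icc (0 : ℝ × ℝ) 1, u (t • v) =
      ∫ y in (0 : ℝ)..t, ∫ x in (0 : ℝ)..t, u (x, y) := by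
  have hinner (y : ℝ) :
      t * ∫ x in (0 : ℝ)..1, u (t * x, y) = ∫ x in (0 : ℝ)..t, u (x, y) := by
    rw [intervalIntegral.mul_integral_comp_mul_left (f := fun x ↦ u (x, y)), mul_zero, mul_one]
  have houter : t * ∫ y in (0 : ℝ)..1, ∫ x in (0 : ℝ)..t, u (x, t * y) =
      ∫ y in (0 : ℝ)..t, ∫ x in (0 : ℝ)..t, u (x, y) := by
    rw [intervalIntegral.mul_integral_comp_mul_left (f := fun y ↦ ∫ x in (0 : ℝ)..t, u (x, y)),
      mul_zero, mul_one]
  rw [setIntegral_Icc_eq_integral_integral (u := fun v ↦ u (t • v)) (by fun_prop), ← houter,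
    sq, mul_assoc, ← intervalIntegral.integral_const_mul]
  simp only [Prod.smul_mk, smul_eq_mul, hinner]

lemma integral_integral_le_of_monotone (hu : Continuous u) (hmono : Monotone u) (ht : 1 ≤ t) :
    ∫ y in (0 : ℝ)..t, ∫ x in (0 : ℝ)..t, u (x, y) ≤
      (∫ v in Set.Icc (0 : ℝ × ℝ) 1, u v) +
        (t - 1) * ((∫ x in (0 : ℝ)..1, u (x, t)) + ∫ y in (0 : ℝ)..t, u (t, y)) := by
  have hslice := continuous_integral_slice hu
  have hint {f : ℝ → ℝ} (hf : Continuous f) : IntervalIntegrable f volume 0 t :=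
    hf.intervalIntegrable 0 t
  have hslice_mono : Monotone fun y ↦ ∫ x in (0 : ℝ)..1, u (x, y) := fun y z hyz ↦
    intervalIntegral.integral_mono zero_le_one (Continuous.intervalIntegrable (by fun_prop) _ _)
      (Continuous.intervalIntegrable (by fun_prop) _ _) fun x ↦ hmono ⟨le_rfl, hyz⟩
  calc ∫ y in (0 : ℝ)..t, ∫ x in (0 : ℝ)..t, u (x, y)
      ≤ ∫ y in (0 : ℝ)..t, ((∫ x in (0 : ℝ)..1, u (x, y)) + (t - 1) * u (t, y)) :=
        intervalIntegral.integral_mono (zero_le_one.trans ht)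
          (hint (intervalIntegral.continuous_parametric_intervalIntegral_of_continuous'
            (f := fun y x ↦ u (x, y)) (by fun_prop) 0 t))
          (hint (by fun_prop)) fun y ↦
            integral_le_add_of_monotone (f := fun x ↦ u (x, y))
              (fun x z hxz ↦ hmono ⟨hxz, le_rfl⟩) 0 ht
    _ = (∫ y in (0 : ℝ)..t, ∫ x in (0 : ℝ)..1, u (x, y)) +
          (t - 1) * ∫ y in (0 : ℝ)..t, u (t, y) := by
        rw [intervalIntegral.integral_add (hint hslice) (hint (by fun_prop)),
          intervalIntegral.integral_const_mul]
    _ ≤ (∫ v in Set.Icc (0 : ℝ × ℝ) 1, u v) +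
          (t - 1) * ((∫ x in (0 : ℝ)..1, u (x, t)) + ∫ y in (0 : ℝ)..t, u (t, y)) := by
        have := integral_le_add_of_monotone hslice_mono 0 ht
        rw [setIntegral_Icc_eq_integral_integral hu]
        linarith

variable {M : Finset ((ℝ × ℝ) × ℝ)}

/-- Scaling a value by `t` multiplies the utility of the chosen item by `t` and adds `t - 1` times
its price. -/
lemma buyerPrice_le (hM : 0 ∈ M) (ht : 1 < t) (v : ℝ × ℝ) :
    buyerPrice M v ≤ (buyerUtility M (t • v) - t * buyerUtility M v) / (t - 1) := by
  obtain ⟨best, hbest, hbest_max⟩ := M.exists_max_image (util v) ⟨0, hM⟩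
  refine csSup_le ⟨best.2, best, hbest, rfl, hbest_max⟩ ?_
  rintro _ ⟨it, hit, rfl, hmax⟩
  have hutil : buyerUtility M v = util v it :=
    le_antisymm (buyerUtility_le_iff.2 ⟨util_zero v ▸ hmax 0 hM, hmax⟩)
      (util_le_buyerUtility hit v)
  have hscaled := util_le_buyerUtility hit (t • v)
  rw [util_smul] at hscaled
  rw [le_div_iff₀ (sub_pos.2 ht), hutil]
  linarith

lemma rev_mul_sq_le (hM : IsMenu M) (ht : 1 < t) :
    rev M * t ^ 2 ≤ (∫ x in (0 : ℝ)..1, buyerUtility M (x, t)) +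
      (∫ y in (0 : ℝ)..t, buyerUtility M (t, y)) -
        (1 + t + t ^ 2) * ∫ v in Set.Icc (0 : ℝ × ℝ) 1, buyerUtility M v := by
  have hcont := continuous_buyerUtility M
  have hint {f : ℝ × ℝ → ℝ} (hf : Continuous f) : IntegrableOn f (Set.Icc (0 : ℝ × ℝ) 1) :=
    hf.continuousOn.integrableOn_compact isCompact_Icc
  have hprice_nonneg : ∀ v, 0 ≤ buyerPrice M v := fun v ↦ by
    refine Real.sSup_nonneg ?_
    rintro _ ⟨it, hit, rfl, -⟩
    exact (hM.2 it hit).2.2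
  have hrev : rev M ≤ ∫ v in Set.Icc (0 : ℝ × ℝ) 1,
      (buyerUtility M (t • v) - t * buyerUtility M v) / (t - 1) :=
    integral_mono_of_nonneg (.of_forall hprice_nonneg) (hint (by fun_prop))
      (.of_forall (buyerPrice_le hM.1 ht))
  rw [integral_div, integral_sub (hint (by fun_prop)) (hint (by fun_prop)), integral_const_mul,
    le_div_iff₀ (sub_pos.2 ht)] at hrev
  have hdilation := integral_integral_le_of_monotone hcont
    (monotone_buyerUtility fun it hit ↦ ⟨(hM.2 it hit).1.1, (hM.2 it hit).2.1.1⟩) ht.le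
  rw [← sq_mul_integral_comp_smul hcont] at hdilation
  refine le_of_mul_le_mul_left ?_ (sub_pos.2 ht)
  have := mul_le_mul_of_nonneg_right hrev (sq_nonneg t)
  linarith

lemma rev_le_revenueFunctional (hM : IsMenu M) :
    rev M ≤ revenueFunctional (buyerUtility M) := by
  have hcont := continuous_buyerUtility M
  have htop : Continuous fun t ↦ ∫ x in (0 : ℝ)..1, buyerUtility M (x, t) :=
    continuous_integral_slice hcont
  have hright : Continuous fun t ↦ ∫ y in (0 : ℝ)..t, buyerUtility M (t, y) :=
    intervalIntegral.continuous_parametric_intervalIntegral_of_continuous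
      (f := fun t y ↦ buyerUtility M (t, y)) (by fun_prop) continuous_id
  have hbound : Continuous fun t ↦ (∫ x in (0 : ℝ)..1, buyerUtility M (x, t)) +
      (∫ y in (0 : ℝ)..t, buyerUtility M (t, y)) -
        (1 + t + t ^ 2) * ∫ v in Set.Icc (0 : ℝ × ℝ) 1, buyerUtility M v :=
    (htop.add hright).sub (by fun_prop)
  have hleft_tendsto : Filter.Tendsto (fun t : ℝ ↦ rev M * t ^ 2) (nhdsWithin 1 (Set.Ioi 1))
      (nhds (rev M * 1 ^ 2)) :=
    (Continuous.tendsto (by fun_prop) 1).mono_left nhdsWithin_le_nhds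
  have hle := le_of_tendsto_of_tendsto hleft_tendsto
    ((hbound.tendsto 1).mono_left nhdsWithin_le_nhds)
    (Filter.eventually_of_mem self_mem_nhdsWithin fun t ht ↦ rev_mul_sq_le hM ht)
  rw [revenueFunctional]
  linarith

end RevenueBound

section TwoItems

variable {a b : (ℝ × ℝ) × ℝ}

lemma isIndirectUtility_buyerUtility_pair (ha : a.1 ≤ 1) (hb : b.1 ≤ 1) :
    IsIndirectUtility (buyerUtility {a, b}) 1 1 :=
  isIndirectUtility_buyerUtility zero_le_one zero_le_one (by simpa using ⟨ha, hb⟩)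

lemma revenueFunctional_buyerUtility_pair_swap (a b : (ℝ × ℝ) × ℝ) :
    revenueFunctional (buyerUtility {(a.1.swap, a.2), (b.1.swap, b.2)}) =
      revenueFunctional (buyerUtility {a, b}) := by
  rw [← revenueFunctional_comp_swap (buyerUtility {a, b})]
  congr 1
  ext v
  simp only [Function.comp_apply, buyerUtility_pair, util_swap]

lemma revenueFunctional_pair_le_of_util_zero_one_nonpos (ha : a.1 ≤ 1) (hb : b.1 ≤ 1)
    (hutil_a : util (0, 1) a ≤ 0) (hutil_b : util (0, 1) b ≤ 0) :
    revenueFunctional (buyerUtility {a, b}) ≤ 59 / 108 := by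
  have hzero : buyerUtility {a, b} (0, 1) = 0 := by
    rw [buyerUtility_pair, max_eq_left (max_le hutil_a hutil_b)]
  have := (isIndirectUtility_buyerUtility_pair ha
    hb).revenueFunctional_le_of_apply_zero_one_eq_zero hzero
  linarith

lemma revenueFunctional_pair_le_of_util_zero_one_le (ha : a.1 ≤ 1) (hb : b.1 ∈ Set.Icc 0 1)
    (hone_one : util (1, 1) a ≤ util (1, 1) b) (hzero_one : util (0, 1) a ≤ util (0, 1) b) :
    revenueFunctional (buyerUtility {a, b}) ≤ 59 / 108 := by
  rcases le_or_gt (util (0, 1) b) 0 with hnonpos | hpos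
  · exact revenueFunctional_pair_le_of_util_zero_one_nonpos ha hb.2 (hzero_one.trans hnonpos)
      hnonpos
  obtain ⟨⟨hb₁_nonneg, -⟩, hb₁_le, hb₂_le⟩ := hb
  simp only [Prod.fst_zero, Prod.fst_one, Prod.snd_one] at hb₁_nonneg hb₁_le hb₂_le
  have hfst : util (1, 1) b = util (0, 1) b + b.1.1 := by
    simp only [util]
    ring
  have hone : buyerUtility {a, b} (1, 1) = util (1, 1) b := by
    rw [buyerUtility_pair, max_eq_right hone_one, max_eq_right (by linarith)]
  have hzero : buyerUtility {a, b} (0, 1) = util (0, 1) b := by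
    rw [buyerUtility_pair, max_eq_right hzero_one, max_eq_right hpos.le]
  have hu := isIndirectUtility_buyerUtility_pair ha (⟨hb₁_le, hb₂_le⟩ : b.1 ≤ 1)
  refine hu.revenueFunctional_le_of_linear_minorant hb₁_le (fun x _ y hy ↦ ?_) (by linarith)
  refine le_trans ?_ (util_le_buyerUtility (by simp : b ∈ {a, b}) (x, y))
  have := mul_le_mul_of_nonneg_left hb₂_le (sub_nonneg.2 hy.2)
  simp only [hone, util]
  linarith

/-- If `a` is worth buying at `(0, 1)` and at `(1, 0)`, then also at every value above the
antidiagonal, whereas the upgrade from `a` to `b` is not worth buying at any value below it. Hence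
offering `a` and `b` amounts to selling `a` and the upgrade `b - a` independently. -/
lemma eqOn_buyerUtility_pair_add (ha : 0 ≤ a.1) (hzero_one : 0 ≤ util (0, 1) a)
    (hone_zero : 0 ≤ util (1, 0) a) (hupgrade : 0 ≤ (b - a).1)
    (hupgrade_zero_one : util (0, 1) (b - a) ≤ 0) (hupgrade_one_zero : util (1, 0) (b - a) ≤ 0) :
    Set.EqOn (buyerUtility {a, b}) (buyerUtility {a} + buyerUtility {b - a}) (Set.Icc 0 1) := by
  rintro ⟨x, y⟩ ⟨⟨hx, -⟩, hx', -⟩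
  have hx₁ : 0 ≤ 1 - x := sub_nonneg.2 hx'
  have hdichotomy : 0 ≤ util (x, y) a ∨ util (x, y) (b - a) ≤ 0 := by
    rcases le_total 0 (x + y - 1) with habove | hbelow
    · left
      rw [util_eq_add_antidiagonal]
      exact add_nonneg (add_nonneg (mul_nonneg hx hone_zero) (mul_nonneg hx₁ hzero_one))
        (mul_nonneg habove ha.2)
    · right
      rw [util_eq_add_antidiagonal]
      exact add_nonpos (add_nonpos (mul_nonpos_of_nonneg_of_nonpos hx hupgrade_one_zero)
        (mul_nonpos_of_nonneg_of_nonpos hx₁ hupgrade_zero_one))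
        (mul_nonpos_of_nonpos_of_nonneg hbelow hupgrade.2)
  have hsub := util_sub (x, y) a b
  simp only [Pi.add_apply, buyerUtility_pair, buyerUtility_singleton]
  grind

lemma revenueFunctional_singleton_le (ha : 0 ≤ a.1) (hzero_one : 0 ≤ util (0, 1) a)
    (hone_zero : 0 ≤ util (1, 0) a) :
    revenueFunctional (buyerUtility {a}) ≤ 59 / 216 * (a.1.1 + a.1.2) := by
  have hone := util_le_buyerUtility (Finset.mem_singleton_self a) (1, 1)
  refine (isIndirectUtility_buyerUtility ha.1 ha.2 (by simp)).revenueFunctional_le_of_corners_le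
    ?_ ?_ <;>
  · rw [buyerUtility_singleton, max_eq_right ‹_›]
    simp only [util] at hone ⊢
    linarith

lemma revenueFunctional_singleton_le_of_corners_nonpos (ha : 0 ≤ a.1)
    (hzero_one : util (0, 1) a ≤ 0) (hone_zero : util (1, 0) a ≤ 0) :
    revenueFunctional (buyerUtility {a}) ≤ 4 / 15 * (a.1.1 + a.1.2) :=
  (isIndirectUtility_buyerUtility ha.1 ha.2 (by simp)).revenueFunctional_le_of_corners_eq_zero
    (by rw [buyerUtility_singleton, max_eq_left hzero_one])
    (by rw [buyerUtility_singleton, max_eq_left hone_zero])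

lemma revenueFunctional_pair_le_of_le_util_corners (ha : a.1 ∈ Set.Icc 0 1) (hb : b.1 ≤ 1)
    (hone_one : util (1, 1) a ≤ util (1, 1) b) (hzero_one : util (0, 1) b ≤ util (0, 1) a)
    (hone_zero : util (1, 0) b ≤ util (1, 0) a) :
    revenueFunctional (buyerUtility {a, b}) ≤ 59 / 108 := by
  rcases le_or_gt (util (0, 1) a) 0 with hnonpos | hzero_one_pos
  · exact revenueFunctional_pair_le_of_util_zero_one_nonpos ha.2 hb hnonpos
      (hzero_one.trans hnonpos)
  rcases le_or_gt (util (1, 0) a) 0 with hnonpos | hone_zero_pos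
  · rw [← revenueFunctional_buyerUtility_pair_swap]
    refine revenueFunctional_pair_le_of_util_zero_one_nonpos (Prod.swap_le_swap.2 ha.2)
      (Prod.swap_le_swap.2 hb) ?_ ?_ <;> rw [← util_swap]
    exacts [hnonpos, hone_zero.trans hnonpos]
  have hupgrade : 0 ≤ (b - a).1 := by
    simp only [util] at hone_one hzero_one hone_zero
    exact ⟨sub_nonneg.2 (by linarith), sub_nonneg.2 (by linarith)⟩
  have hupgrade_zero_one : util (0, 1) (b - a) ≤ 0 := by rw [util_sub]; linarith
  have hupgrade_one_zero : util (1, 0) (b - a) ≤ 0 := by rw [util_sub]; linarith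
  have hbase_le := revenueFunctional_singleton_le ha.1 hzero_one_pos.le hone_zero_pos.le
  have hupgrade_le := revenueFunctional_singleton_le_of_corners_nonpos hupgrade
    hupgrade_zero_one hupgrade_one_zero
  rw [revenueFunctional_congr (eqOn_buyerUtility_pair_add ha.1 hzero_one_pos.le hone_zero_pos.le
      hupgrade hupgrade_zero_one hupgrade_one_zero),
    revenueFunctional_add (continuous_buyerUtility _) (continuous_buyerUtility _)]
  have hupgrade₁ := hupgrade.1
  have hupgrade₂ := hupgrade.2
  have hb₁ := hb.1
  have hb₂ := hb.2
  simp only [Prod.fst_sub, Prod.snd_sub, Prod.fst_zero, Prod.snd_zero, Prod.fst_one,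
    Prod.snd_one] at hupgrade_le hupgrade₁ hupgrade₂ hb₁ hb₂
  linarith

lemma revenueFunctional_pair_le_of_util_one_one_le (ha : a.1 ∈ Set.Icc 0 1)
    (hb : b.1 ∈ Set.Icc 0 1) (hone_one : util (1, 1) a ≤ util (1, 1) b) :
    revenueFunctional (buyerUtility {a, b}) ≤ 59 / 108 := by
  rcases le_total (util (0, 1) a) (util (0, 1) b) with hzero_one | hzero_one
  · exact revenueFunctional_pair_le_of_util_zero_one_le ha.2 hb hone_one hzero_one
  rcases le_total (util (1, 0) a) (util (1, 0) b) with hone_zero | hone_zero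
  · rw [← revenueFunctional_buyerUtility_pair_swap]
    refine revenueFunctional_pair_le_of_util_zero_one_le (Prod.swap_le_swap.2 ha.2)
      ⟨Prod.swap_le_swap.2 hb.1, Prod.swap_le_swap.2 hb.2⟩ ?_ ?_ <;>
      rw [← util_swap, ← util_swap]
    exacts [hone_one, hone_zero]
  · exact revenueFunctional_pair_le_of_le_util_corners ha hb.2 hone_one hzero_one hone_zero

lemma revenueFunctional_pair_le (ha : a.1 ∈ Set.Icc 0 1) (hb : b.1 ∈ Set.Icc 0 1) :
    revenueFunctional (buyerUtility {a, b}) ≤ 59 / 108 := by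
  rcases le_total (util (1, 1) a) (util (1, 1) b) with hone_one | hone_one
  · exact revenueFunctional_pair_le_of_util_one_one_le ha hb hone_one
  · rw [Finset.pair_comm]
    exact revenueFunctional_pair_le_of_util_one_one_le hb ha hone_one

end TwoItems

lemma exists_eq_insert_pair {α : Type*} [DecidableEq α] {s : Finset α} {x : α} (hx : x ∈ s)
    (hcard : s.card ≤ 3) : ∃ a ∈ s, ∃ b ∈ s, s = {x, a, b} := by
  rw [← Finset.insert_erase hx]
  have hcard_erase : (s.erase x).card ≤ 2 := by
    rw [Finset.card_erase_of_mem hx]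
    lia
  interval_cases h : (s.erase x).card
  · rw [Finset.card_eq_zero.1 h]
    exact ⟨x, by simp, x, by simp, by simp⟩
  · obtain ⟨a, ha⟩ := Finset.card_eq_one.1 h
    exact ⟨a, by simp [ha], a, by simp [ha], by simp [ha]⟩
  · obtain ⟨a, b, -, hab⟩ := Finset.card_eq_two.1 h
    exact ⟨a, by simp [hab], b, by simp [hab], by simp [hab]⟩

/-- every menu on `[0,1]²` with at most 3 items has revenue at most
`59/108` under the uniform distribution on `[0,1]²`. -/
theorem three_menu_revenue_le (M : Finset ((ℝ × ℝ) × ℝ))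
    (hM : IsMenu M) (hcard : M.card ≤ 3) :
    rev M ≤ 59 / 108 := by
  obtain ⟨a, ha, b, hb, hM_eq⟩ := exists_eq_insert_pair hM.1 hcard
  have hmem : ∀ it ∈ M, it.1 ∈ Set.Icc (0 : ℝ × ℝ) 1 := fun it hit ↦
    have ⟨hfst, hsnd, _⟩ := hM.2 it hit
    ⟨⟨hfst.1, hsnd.1⟩, hfst.2, hsnd.2⟩
  calc rev M ≤ revenueFunctional (buyerUtility M) := rev_le_revenueFunctional hM
    _ = revenueFunctional (buyerUtility {a, b}) := by
      rw [hM_eq]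
      exact congrArg revenueFunctional (buyerUtility_insert_zero {a, b})
    _ ≤ 59 / 108 := revenueFunctional_pair_le (hmem a ha) (hmem b hb)
end
end

section
/- The menu M = {((0,0),0), ((1,0),2/3), ((1,1),5/6)} (sell the first item at price 2/3 or the bundle of both items at price 5/6) has revenue exactly 59/108 under the uniform distribution on [0,1]^2. -/
open MeasureTheory Real

noncomputable section

/-!
Let the first item cost `p` and the bundle `q`, and fix the value `x` of the first item. The buyer
takes the bundle exactly when the value `y` of the second item reaches the threshold `q - min x p`,
and otherwise takes the first item or nothing according to whether `p ≤ x`. So the price paid is a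
step function of `y`, and its integral over `y` is affine in `x` below `p` and constant above.
-/

/-- `IsPurchase M v it`: from the menu `M`, a buyer with value `v` buys `it`. Breaking ties in favor
of the seller amounts to maximizing the pair (utility, price) lexicographically. -/
def IsPurchase (M : Finset ((ℝ × ℝ) × ℝ)) (v : ℝ × ℝ) (it : (ℝ × ℝ) × ℝ) : Prop :=
  it ∈ M ∧ ∀ it' ∈ M, toLex (util v it', it'.2) ≤ toLex (util v it, it.2)

/-- The menu selling the first item at price `p` and the bundle of both items at price `q`. -/
def firstOrBundleMenu (p q : ℝ) : Finset ((ℝ × ℝ) × ℝ) :=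
  {((0, 0), 0), ((1, 0), p), ((1, 1), q)}

section Purchase

variable {M : Finset ((ℝ × ℝ) × ℝ)} {v : ℝ × ℝ} {it : (ℝ × ℝ) × ℝ}

lemma IsPurchase.buyerPrice_eq (h : IsPurchase M v it) : buyerPrice M v = it.2 := by
  obtain ⟨hit, hmax⟩ := h
  simp only [Prod.Lex.toLex_le_toLex'] at hmax
  refine IsGreatest.csSup_eq ⟨⟨it, hit, rfl, fun it' hit' ↦ (hmax it' hit').1⟩, ?_⟩
  rintro _ ⟨it', hit', rfl, hmax'⟩
  exact (hmax it' hit').2 ((hmax it' hit').1.antisymm (hmax' it hit))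

lemma exists_isPurchase (hM : M.Nonempty) (v : ℝ × ℝ) : ∃ it, IsPurchase M v it :=
  M.exists_max_image (fun it ↦ toLex (util v it, it.2)) hM

lemma measurable_util (it : (ℝ × ℝ) × ℝ) : Measurable fun v ↦ util v it := by
  unfold util
  fun_prop

lemma measurableSet_isPurchase (M : Finset ((ℝ × ℝ) × ℝ)) (it : (ℝ × ℝ) × ℝ) :
    MeasurableSet {v | IsPurchase M v it} := by
  simp only [IsPurchase, Prod.Lex.toLex_le_toLex, Set.ofPred_and, Set.ofPred_forall,
    Set.ofPred_or]
  refine (MeasurableSet.const _).inter (Finset.measurableSet_biInter _ fun it' _ ↦ ?_)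
  have measurableSet_util_lt := measurableSet_lt (measurable_util it') (measurable_util it)
  have measurableSet_util_eq := measurableSet_eq_fun (measurable_util it') (measurable_util it)
  exact measurableSet_util_lt.union (measurableSet_util_eq.inter (MeasurableSet.const _))

lemma measurable_buyerPrice (hM : M.Nonempty) : Measurable (buyerPrice M) := by
  intro s _
  have preimage_eq : buyerPrice M ⁻¹' s =
      ⋃ it ∈ {it | it ∈ M ∧ it.2 ∈ s}, {v | IsPurchase M v it} := by
    ext v
    simp only [Set.mem_preimage, Set.mem_iUnion, Set.mem_ofPred_eq, exists_prop]
    constructor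
    · intro hv
      obtain ⟨it, hit⟩ := exists_isPurchase hM v
      exact ⟨it, ⟨hit.1, hit.buyerPrice_eq ▸ hv⟩, hit⟩
    · rintro ⟨it, ⟨_, hs⟩, hit⟩
      rwa [hit.buyerPrice_eq]
  rw [preimage_eq]
  exact (M.finite_toSet.subset fun _ h ↦ h.1).measurableSet_biUnion
    fun it _ ↦ measurableSet_isPurchase M it

lemma abs_buyerPrice_le (hM : M.Nonempty) (v : ℝ × ℝ) : |buyerPrice M v| ≤ ∑ it ∈ M, |it.2| := by
  obtain ⟨it, hit⟩ := exists_isPurchase hM v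
  rw [hit.buyerPrice_eq]
  exact Finset.single_le_sum (f := fun it ↦ |it.2|) (fun _ _ ↦ abs_nonneg _) hit.1

lemma rev_eq_intervalIntegral (hM : M.Nonempty) :
    rev M = ∫ x in (0 : ℝ)..1, ∫ y in (0 : ℝ)..1, buyerPrice M (x, y) := by
  have integrable : IntegrableOn (buyerPrice M) (Set.Icc (0 : ℝ) 1 ×ˢ Set.Icc (0 : ℝ) 1) :=
    Measure.integrableOn_of_bounded (isCompact_Icc.prod isCompact_Icc).measure_ne_top
      (measurable_buyerPrice hM).aestronglyMeasurable
      (Filter.Eventually.of_forall (abs_buyerPrice_le hM))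
  rw [rev, ← Set.Icc_prod_Icc, Measure.volume_eq_prod, setIntegral_prod _ integrable]
  simp only [integral_Icc_eq_integral_Ioc, intervalIntegral.integral_of_le zero_le_one]

end Purchase

lemma integral_ite_le {E : Type*} [NormedAddCommGroup E] [NormedSpace ℝ E] {μ : Measure ℝ}
    [NullSingletonClass μ] {f g : ℝ → E} {a b c : ℝ} (hac : a ≤ c) (hcb : c ≤ b)
    (hg : IntervalIntegrable g μ a c) (hf : IntervalIntegrable f μ c b) :
    ∫ x in a..b, (if c ≤ x then f x else g x) ∂μ =
      (∫ x in a..c, g x ∂μ) + ∫ x in c..b, f x ∂μ := by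
  have eqOn_left : Set.EqOn g (fun x ↦ if c ≤ x then f x else g x) (Set.uIoo a c) := by
    rw [Set.uIoo_of_le hac]
    exact fun x hx ↦ (if_neg hx.2.not_ge).symm
  have eqOn_right : Set.EqOn f (fun x ↦ if c ≤ x then f x else g x) (Set.uIoo c b) := by
    rw [Set.uIoo_of_le hcb]
    exact fun x hx ↦ (if_pos hx.1.le).symm
  rw [intervalIntegral.integral_congr_uIoo eqOn_left,
    intervalIntegral.integral_congr_uIoo eqOn_right,
    intervalIntegral.integral_add_adjacent_intervals (hg.congr_uIoo eqOn_left)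
      (hf.congr_uIoo eqOn_right)]

section FirstOrBundle

variable {p q : ℝ} {v : ℝ × ℝ}

lemma isPurchase_firstOrBundleMenu_iff {it : (ℝ × ℝ) × ℝ} :
    IsPurchase (firstOrBundleMenu p q) v it ↔ it ∈ firstOrBundleMenu p q ∧
      toLex (0, 0) ≤ toLex (util v it, it.2) ∧ toLex (v.1 - p, p) ≤ toLex (util v it, it.2) ∧
        toLex (v.1 + v.2 - q, q) ≤ toLex (util v it, it.2) := by
  simp [IsPurchase, firstOrBundleMenu, util]

lemma isPurchase_bundle (hq : 0 ≤ q) (hpq : p ≤ q) (hzero : q ≤ v.1 + v.2)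
    (hfirst : q - p ≤ v.2) : IsPurchase (firstOrBundleMenu p q) v ((1, 1), q) := by
  refine isPurchase_firstOrBundleMenu_iff.mpr ⟨by simp [firstOrBundleMenu], ?_⟩
  simp only [util, Prod.Lex.toLex_le_toLex']
  grind

lemma isPurchase_first (hp : 0 ≤ p) (hzero : p ≤ v.1) (hbundle : v.2 < q - p) :
    IsPurchase (firstOrBundleMenu p q) v ((1, 0), p) := by
  refine isPurchase_firstOrBundleMenu_iff.mpr ⟨by simp [firstOrBundleMenu], ?_⟩
  simp only [util, Prod.Lex.toLex_le_toLex']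
  grind

lemma isPurchase_zero (hfirst : v.1 < p) (hbundle : v.1 + v.2 < q) :
    IsPurchase (firstOrBundleMenu p q) v ((0, 0), 0) := by
  refine isPurchase_firstOrBundleMenu_iff.mpr ⟨by simp [firstOrBundleMenu], ?_⟩
  simp only [util, Prod.Lex.toLex_le_toLex']
  grind

-- The best alternative to the bundle has utility `max 0 (v.1 - p) = v.1 - min v.1 p`.
lemma buyerPrice_firstOrBundleMenu (hp : 0 ≤ p) (hpq : p ≤ q) (v : ℝ × ℝ) :
    buyerPrice (firstOrBundleMenu p q) v =
      if q - min v.1 p ≤ v.2 then q else if p ≤ v.1 then p else 0 := by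
  split_ifs with hbundle hfirst
  · exact (isPurchase_bundle (hp.trans hpq) hpq (by linarith [min_le_left v.1 p])
      (by linarith [min_le_right v.1 p])).buyerPrice_eq
  · rw [min_eq_right hfirst, not_le] at hbundle
    exact (isPurchase_first hp hfirst hbundle).buyerPrice_eq
  · rw [not_le] at hfirst
    rw [min_eq_left hfirst.le, not_le] at hbundle
    exact (isPurchase_zero hfirst (by linarith)).buyerPrice_eq

lemma integral_buyerPrice_firstOrBundleMenu {x : ℝ} (hp : 0 ≤ p) (hpq : p ≤ q)
    (hq : q ≤ 1) (hx : 0 ≤ x) :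
    ∫ y in (0 : ℝ)..1, buyerPrice (firstOrBundleMenu p q) (x, y) =
      if p ≤ x then q - (q - p) ^ 2 else q * (1 - q + x) := by
  have threshold_nonneg : 0 ≤ q - min x p := by linarith [min_le_right x p]
  have threshold_le_one : q - min x p ≤ 1 := by linarith [le_min hx hp]
  calc ∫ y in (0 : ℝ)..1, buyerPrice (firstOrBundleMenu p q) (x, y)
    _ = ∫ y in (0 : ℝ)..1, if q - min x p ≤ y then q else if p ≤ x then p else 0 := by
      simp only [buyerPrice_firstOrBundleMenu hp hpq]
    _ = (∫ _ in (0 : ℝ)..(q - min x p), if p ≤ x then p else 0) + ∫ _ in (q - min x p)..1, q :=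
      integral_ite_le threshold_nonneg threshold_le_one intervalIntegrable_const
        intervalIntegrable_const
    _ = if p ≤ x then q - (q - p) ^ 2 else q * (1 - q + x) := by
      simp only [intervalIntegral.integral_const, smul_eq_mul]
      split_ifs with hpx
      · rw [min_eq_right hpx]
        ring
      · rw [min_eq_left (not_le.mp hpx).le]
        ring

end FirstOrBundle

theorem optimal_three_menu_revenue_general {p q : ℝ} (hp : 0 ≤ p) (hpq : p ≤ q) (hq : q ≤ 1) :
    rev (firstOrBundleMenu p q) =
      q * ((1 - q) * p + p ^ 2 / 2) + (1 - p) * (q - (q - p) ^ 2) := by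
  have slice : ∀ x ∈ Set.uIcc (0 : ℝ) 1, ∫ y in (0 : ℝ)..1,
      buyerPrice (firstOrBundleMenu p q) (x, y) =
        if p ≤ x then q - (q - p) ^ 2 else q * (1 - q + x) := fun x hx ↦
    integral_buyerPrice_firstOrBundleMenu hp hpq hq (Set.uIcc_of_le (zero_le_one' ℝ) ▸ hx).1
  calc rev (firstOrBundleMenu p q)
    _ = ∫ x in (0 : ℝ)..1, ∫ y in (0 : ℝ)..1, buyerPrice (firstOrBundleMenu p q) (x, y) :=
      rev_eq_intervalIntegral (Finset.insert_nonempty _ _)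
    _ = ∫ x in (0 : ℝ)..1, if p ≤ x then q - (q - p) ^ 2 else q * (1 - q + x) :=
      intervalIntegral.integral_congr slice
    _ = (∫ x in (0 : ℝ)..p, q * (1 - q + x)) + ∫ _ in p..1, (q - (q - p) ^ 2) :=
      integral_ite_le hp (hpq.trans hq) (Continuous.intervalIntegrable (by fun_prop) _ _) (by simp)
    _ = q * ((1 - q) * p + p ^ 2 / 2) + (1 - p) * (q - (q - p) ^ 2) := by
      rw [intervalIntegral.integral_const_mul, intervalIntegral.integral_add (by simp) (by simp)]
      simp only [intervalIntegral.integral_const, integral_id, smul_eq_mul]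
      ring

/-- the menu `{((0,0),0), ((1,0),2/3), ((1,1),5/6)}` has revenue
exactly `59/108` under the uniform distribution on `[0,1]²`. -/
theorem optimal_three_menu_revenue :
    rev {(((0 : ℝ), (0 : ℝ)), (0 : ℝ)),
         (((1 : ℝ), (0 : ℝ)), (2 / 3 : ℝ)),
         (((1 : ℝ), (1 : ℝ)), (5 / 6 : ℝ))} = 59 / 108 := by
  rw [← firstOrBundleMenu, optimal_three_menu_revenue_general] <;> norm_num
end
end

section
/- For every symmetric menu M on [0,1]^2 with at most 3 items (including the zero item ((0,0),0)), the revenue of M under the uniform distribution on [0,1]^2 is at most 2*sqrt(6)/9, and this bound is attained by the menu {((0,0),0), ((1,1),sqrt(2/3))} that sells the bundle of the two items at price sqrt(2/3) = sqrt(6)/3. -/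
open MeasureTheory Real

noncomputable section

/-- A menu is symmetric if it is closed under swapping the two coordinates of
the allocation. -/
def SymmetricMenu (M : Finset ((ℝ × ℝ) × ℝ)) : Prop :=
  ∀ it ∈ M, ((it.1.2, it.1.1), it.2) ∈ M

/-!
A buyer facing lotteries over the bundle has the single-dimensional type `t = v₁ + v₂`. Walking
along the upper envelope of the utilities `t ↦ t * a - p`, each breakpoint `τ` at which the chosen
lottery changes from `(a, p)` to `(a', p')` raises the payment by `(a' - a) * τ`. So the payment
is a combination, with weights adding up to the largest allocation, of payments for the bundle at
posted prices `τ`, and the revenue is at most that of the best bundle price. A symmetric menu with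
at most three items either consists of lotteries over the bundle, or is
`{0, ((x, y), p), ((y, x), p)}`; in the latter case a buyer who pays `p` has `p ≤ v₁ + v₂`.
-/

/-- Payment, at the posted price `τ`, of a buyer whose value for the good is `t`. -/
def postedPayment (τ t : ℝ) : ℝ :=
  (Set.Ici τ).indicator (fun _ => τ) t

/-- Payments, as functions of the buyer's value, under finitely supported random posted prices. -/
def randomPostedPayments : Set (ℝ → ℝ) :=
  convexHull ℝ (Set.range postedPayment)

lemma postedPayment_of_le {τ t : ℝ} (h : τ ≤ t) : postedPayment τ t = τ :=
  Set.indicator_of_mem (Set.mem_Ici.2 h) _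

lemma postedPayment_of_lt {τ t : ℝ} (h : t < τ) : postedPayment τ t = 0 :=
  Set.indicator_of_notMem (Set.notMem_Ici.2 h) _

lemma postedPayment_nonneg {τ : ℝ} (hτ : 0 ≤ τ) (t : ℝ) : 0 ≤ postedPayment τ t :=
  Set.indicator_nonneg (fun _ _ => hτ) t

lemma measurable_postedPayment (τ : ℝ) : Measurable (postedPayment τ) :=
  measurable_const.indicator measurableSet_Ici

lemma norm_postedPayment_le (τ t : ℝ) : ‖postedPayment τ t‖ ≤ ‖τ‖ :=
  norm_indicator_le_norm_self (fun _ => τ) t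

lemma postedPayment_mem_randomPostedPayments (τ : ℝ) :
    postedPayment τ ∈ randomPostedPayments :=
  subset_convexHull ℝ _ ⟨τ, rfl⟩

lemma zero_mem_randomPostedPayments : (0 : ℝ → ℝ) ∈ randomPostedPayments := by
  have h : postedPayment 0 = 0 := Set.indicator_zero ℝ _
  exact h ▸ postedPayment_mem_randomPostedPayments 0

lemma convex_randomPostedPayments : Convex ℝ randomPostedPayments :=
  convex_convexHull ℝ _

open scoped Pointwise in
lemma add_smul_postedPayment_mem {c d : ℝ} {g : ℝ → ℝ} (hg : g ∈ c • randomPostedPayments)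
    (hc : 0 ≤ c) (hd : 0 ≤ d) (τ : ℝ) :
    g + d • postedPayment τ ∈ (c + d) • randomPostedPayments := by
  rw [convex_randomPostedPayments.add_smul hc hd]
  exact Set.add_mem_add hg (Set.smul_mem_smul_set (postedPayment_mem_randomPostedPayments τ))

section Lotteries

/-- Lottery `i` maximizes the utility `t * a j - p j` over the lotteries `j ∈ s`, which allocate
the good with probability `a j` at price `p j`, for a buyer whose value for the good is `t`. -/
def IsOptimal {ι : Type*} (s : Finset ι) (a p : ι → ℝ) (t : ℝ) (i : ι) : Prop :=
  ∀ j ∈ s, t * a j - p j ≤ t * a i - p i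

variable {ι : Type*} {s : Finset ι} {a p : ι → ℝ} {i j k o : ι} {t τ : ℝ}

lemma IsOptimal.mono {s' : Finset ι} (h : IsOptimal s a p t i) (hs : s' ⊆ s) :
    IsOptimal s' a p t i :=
  fun j hj => h j (hs hj)

lemma IsOptimal.le_of_alloc_lt (hi : IsOptimal s a p τ i) (hj : IsOptimal s a p t j)
    (his : i ∈ s) (hjs : j ∈ s) (hij : a i < a j) : τ ≤ t := by
  have hτ := hi j hjs
  have ht := hj i his
  refine le_of_mul_le_mul_right ?_ (sub_pos.2 hij)
  linarith

lemma IsOptimal.price_le_of_alloc_le (hj : IsOptimal s a p t j) (hk : k ∈ s) (ht : 0 ≤ t)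
    (hjk : a j ≤ a k) : p j ≤ p k := by
  linarith [hj k hk, mul_le_mul_of_nonneg_left hjk ht]

lemma IsOptimal.of_le (hi : IsOptimal s a p τ i) (hτt : τ ≤ t) (hmax : ∀ j ∈ s, a j ≤ a i) :
    IsOptimal s a p t i := by
  intro j hj
  linarith [hi j hj, mul_nonneg (sub_nonneg.2 hτt) (sub_nonneg.2 (hmax j hj))]

lemma exists_breakpoint (ho : o ∈ s) (ha : a o = 0) (hp : p o = 0) (hk₀ : 0 < a k)
    (hpk : 0 ≤ p k) (hk : ∀ j ∈ s, a j < a k ∨ a j = a k ∧ p k ≤ p j) :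
    ∃ i ∈ s, a i < a k ∧ ∃ τ, 0 ≤ τ ∧ IsOptimal s a p τ i ∧ IsOptimal s a p τ k := by
  -- `τ` is the largest value at which some lottery of smaller allocation is as good as `k`.
  obtain ⟨i, hi, hmax⟩ := ({j ∈ s | a j < a k}).exists_max_image
    (fun j => (p k - p j) / (a k - a j)) ⟨o, Finset.mem_filter.2 ⟨ho, ha ▸ hk₀⟩⟩
  obtain ⟨his, hik⟩ := Finset.mem_filter.1 hi
  set τ := (p k - p i) / (a k - a i)
  have hτ_mul : τ * (a k - a i) = p k - p i := div_mul_cancel₀ _ (sub_pos.2 hik).ne'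
  have hτ_nonneg : 0 ≤ τ := by
    refine le_trans ?_ (hmax o (Finset.mem_filter.2 ⟨ho, ha ▸ hk₀⟩))
    rw [ha, hp, sub_zero, sub_zero]
    exact div_nonneg hpk hk₀.le
  have hk_opt : IsOptimal s a p τ k := by
    intro j hj
    rcases hk j hj with hlt | ⟨heq, hle⟩
    · have := (div_le_iff₀ (sub_pos.2 hlt)).1 (hmax j (Finset.mem_filter.2 ⟨hj, hlt⟩))
      linarith
    · rw [heq]
      linarith
  have hi_opt : IsOptimal s a p τ i := fun j hj => (hk_opt j hj).trans (by linarith)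
  exact ⟨i, his, hik, τ, hτ_nonneg, hi_opt, hk_opt⟩

lemma IsOptimal.price_le_add_postedPayment (hj : IsOptimal s a p t j) (hjs : j ∈ s)
    (ht : 0 ≤ t) (his : i ∈ s) (hks : k ∈ s) (hik : a i ≤ a k) (hk_max : ∀ j ∈ s, a j ≤ a k)
    (hτ : 0 ≤ τ) (hi : IsOptimal s a p τ i) (hk : IsOptimal s a p τ k) {c : ℝ}
    (hc : ∀ j ∈ s, a j ≤ a i → IsOptimal {j ∈ s | a j ≤ a i} a p t j → p j ≤ c) :
    p j ≤ c + (a k - a i) * postedPayment τ t := by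
  have hsub : {j ∈ s | a j ≤ a i} ⊆ s := Finset.filter_subset _ _
  rcases le_or_gt (a j) (a i) with hji | hij
  · exact le_add_of_le_of_nonneg (hc j hjs hji (hj.mono hsub))
      (mul_nonneg (sub_nonneg.2 hik) (postedPayment_nonneg hτ t))
  · have hτt : τ ≤ t := hi.le_of_alloc_lt hj his hjs hij
    have hi_opt : IsOptimal {j ∈ s | a j ≤ a i} a p t i :=
      (hi.mono hsub).of_le hτt fun j hj => (Finset.mem_filter.1 hj).2
    calc p j ≤ p k := hj.price_le_of_alloc_le hks ht (hk_max j hjs)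
      _ = p i + (a k - a i) * τ := by linarith [hi k hks, hk i his]
      _ ≤ c + (a k - a i) * τ := by
        gcongr
        exact hc i his le_rfl hi_opt
      _ = c + (a k - a i) * postedPayment τ t := by rw [postedPayment_of_le hτt]

open scoped Pointwise in
lemma exists_price_le_mem_smul_randomPostedPayments (ho : o ∈ s) (hao : a o = 0) (hpo : p o = 0)
    (ha : ∀ j ∈ s, 0 ≤ a j) (hp : ∀ j ∈ s, 0 ≤ p j) (hks : k ∈ s)
    (hk : ∀ j ∈ s, a j < a k ∨ a j = a k ∧ p k ≤ p j) :
    ∃ g ∈ a k • randomPostedPayments,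
      ∀ t, 0 ≤ t → ∀ j ∈ s, IsOptimal s a p t j → p j ≤ g t := by
  induction s using Finset.strongInduction generalizing k with
  | H s ih =>
  have hk_max : ∀ j ∈ s, a j ≤ a k := fun j hj => (hk j hj).elim le_of_lt fun h => h.1.le
  rcases (ha k hks).eq_or_lt with hk₀ | hk₀
  · refine ⟨0, ⟨0, zero_mem_randomPostedPayments, smul_zero _⟩, fun t ht j hj hopt => ?_⟩
    have hjo : a j ≤ a o := by rw [hao, hk₀]; exact hk_max j hj
    exact (hopt.price_le_of_alloc_le ho ht hjo).trans_eq hpo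
  obtain ⟨i, his, hik, τ, hτ, hi_opt, hk_opt⟩ :=
    exists_breakpoint ho hao hpo hk₀ (hp k hks) hk
  have hsub : {j ∈ s | a j ≤ a i} ⊆ s := Finset.filter_subset _ _
  have hi_max : ∀ j ∈ ({j ∈ s | a j ≤ a i} : Finset ι), a j < a i ∨ a j = a i ∧ p i ≤ p j := by
    intro j hj
    refine (Finset.mem_filter.1 hj).2.lt_or_eq.imp_right fun heq => ⟨heq, ?_⟩
    have := hi_opt j (hsub hj)
    rw [heq] at this
    linarith
  obtain ⟨g, hg, hg_bound⟩ := ih _ (Finset.filter_ssubset.2 ⟨k, hks, hik.not_ge⟩)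
    (Finset.mem_filter.2 ⟨ho, hao ▸ ha i his⟩)
    (fun j hj => ha j (hsub hj)) (fun j hj => hp j (hsub hj))
    (Finset.mem_filter.2 ⟨his, le_rfl⟩) hi_max
  refine ⟨g + (a k - a i) • postedPayment τ, ?_, fun t ht j hj hopt => ?_⟩
  · simpa only [add_sub_cancel] using
      add_smul_postedPayment_mem hg (ha i his) (sub_nonneg.2 hik.le) τ
  · exact hopt.price_le_add_postedPayment hj ht his hks hik.le hk_max hτ hi_opt hk_opt
      fun j hj hji => hg_bound t ht j (Finset.mem_filter.2 ⟨hj, hji⟩)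

lemma exists_price_le_mem_randomPostedPayments (ho : o ∈ s) (hao : a o = 0) (hpo : p o = 0)
    (ha : ∀ j ∈ s, a j ∈ Set.Icc 0 1) (hp : ∀ j ∈ s, 0 ≤ p j) :
    ∃ g ∈ randomPostedPayments,
      ∀ t, 0 ≤ t → ∀ j ∈ s, IsOptimal s a p t j → p j ≤ g t := by
  -- The largest allocation in `s`, at the lowest price available for it.
  obtain ⟨k, hks, hk⟩ := s.exists_max_image (fun j => toLex (a j, -p j)) ⟨o, ho⟩
  simp only [Prod.Lex.toLex_le_toLex, neg_le_neg_iff] at hk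
  obtain ⟨_, ⟨g, hg, rfl⟩, hbound⟩ :=
    exists_price_le_mem_smul_randomPostedPayments ho hao hpo (fun j hj => (ha j hj).1) hp hks hk
  exact ⟨_, convex_randomPostedPayments.smul_mem_of_zero_mem zero_mem_randomPostedPayments hg
    (ha k hks), hbound⟩

end Lotteries

/-- The set `[0,1]²` of buyer values. -/
abbrev unitSquare : Set (ℝ × ℝ) :=
  Set.Icc (0, 0) (1, 1)

/-- Revenue from selling only the bundle of both items, at price `τ`. -/
def bundleRevenue (τ : ℝ) : ℝ :=
  ∫ v in unitSquare, postedPayment τ (v.1 + v.2)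

lemma integrableOn_postedPayment_add (τ : ℝ) :
    IntegrableOn (fun v : ℝ × ℝ => postedPayment τ (v.1 + v.2)) unitSquare :=
  Measure.integrableOn_of_bounded isCompact_Icc.measure_ne_top
    ((measurable_postedPayment τ).comp
      (measurable_fst.add measurable_snd)).aestronglyMeasurable
    (.of_forall fun _ => norm_postedPayment_le τ _)

lemma integral_postedPayment_add (τ x : ℝ) :
    ∫ y in Set.Icc (0 : ℝ) 1, postedPayment τ (x + y) = τ * max 0 (1 - max 0 (τ - x)) := by
  have h_indicator :
      (fun y => postedPayment τ (x + y)) = (Set.Ici (τ - x)).indicator fun _ => τ := by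
    funext y
    simp only [postedPayment, Set.indicator, Set.mem_Ici, tsub_le_iff_left]
  have h_inter : Set.Icc (0 : ℝ) 1 ∩ Set.Ici (τ - x) = Set.Icc (max 0 (τ - x)) 1 := by
    rw [← Set.Ici_inter_Iic, Set.inter_right_comm, Set.Ici_inter_Ici, Set.Ici_inter_Iic]
  rw [h_indicator, setIntegral_indicator measurableSet_Ici, h_inter, setIntegral_const,
    Real.volume_real_Icc, max_comm, smul_eq_mul, mul_comm]

lemma bundleRevenue_eq_mul_integral (τ : ℝ) :
    bundleRevenue τ = τ * ∫ x in (0 : ℝ)..1, max 0 (1 - max 0 (τ - x)) := by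
  have h_int := integrableOn_postedPayment_add τ
  rw [unitSquare, ← Set.Icc_prod_Icc, Measure.volume_eq_prod] at h_int
  rw [bundleRevenue, unitSquare, ← Set.Icc_prod_Icc, Measure.volume_eq_prod,
    setIntegral_prod _ h_int]
  simp only [integral_postedPayment_add]
  rw [integral_const_mul, intervalIntegral.integral_of_le zero_le_one,
    integral_Icc_eq_integral_Ioc]

lemma intervalIntegrable_max_one_sub_max (τ x₀ x₁ : ℝ) :
    IntervalIntegrable (fun x : ℝ => max 0 (1 - max 0 (τ - x))) volume x₀ x₁ :=
  Continuous.intervalIntegrable (by fun_prop) _ _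

lemma bundleRevenue_of_le_one {τ : ℝ} (h₀ : 0 ≤ τ) (h₁ : τ ≤ 1) :
    bundleRevenue τ = τ * (1 - τ ^ 2 / 2) := by
  have h_left : ∫ x in (0 : ℝ)..τ, max 0 (1 - max 0 (τ - x)) = ∫ x in (0 : ℝ)..τ, (1 - τ + x) := by
    refine intervalIntegral.integral_congr fun x hx => ?_
    obtain ⟨hx₀, hxτ⟩ := Set.uIcc_of_le h₀ ▸ hx
    rw [max_eq_right (sub_nonneg.2 hxτ), max_eq_right (by linarith)]
    ring
  have h_right : ∫ x in τ..1, max 0 (1 - max 0 (τ - x)) = ∫ _ in τ..1, (1 : ℝ) := by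
    refine intervalIntegral.integral_congr fun x hx => ?_
    obtain ⟨hτx, -⟩ := Set.uIcc_of_le h₁ ▸ hx
    rw [max_eq_left (sub_nonpos.2 hτx), sub_zero, max_eq_right zero_le_one]
  rw [bundleRevenue_eq_mul_integral, ← intervalIntegral.integral_add_adjacent_intervals
    (intervalIntegrable_max_one_sub_max τ 0 τ) (intervalIntegrable_max_one_sub_max τ τ 1),
    h_left, h_right, intervalIntegral.integral_add (by simp) (by simp)]
  simp only [intervalIntegral.integral_const, integral_id, smul_eq_mul]
  ring

lemma bundleRevenue_le_half {τ : ℝ} (h : 1 ≤ τ) : bundleRevenue τ ≤ 1 / 2 := by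
  have h_integral : ∫ x in (0 : ℝ)..1, max 0 (1 - max 0 (τ - x)) ≤ max 0 (2 - τ) / 2 := by
    calc ∫ x in (0 : ℝ)..1, max 0 (1 - max 0 (τ - x))
        ≤ ∫ x in (0 : ℝ)..1, max 0 (2 - τ) * x := by
          refine intervalIntegral.integral_mono_on zero_le_one
            (intervalIntegrable_max_one_sub_max τ 0 1)
            (Continuous.intervalIntegrable (by fun_prop) _ _) fun x ⟨hx₀, hx₁⟩ => ?_
          rw [max_eq_right (a := 0) (b := τ - x) (by linarith)]
          refine max_le (by positivity) ?_
          nlinarith [le_max_right 0 (2 - τ)]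
      _ = max 0 (2 - τ) / 2 := by
          rw [intervalIntegral.integral_const_mul, integral_id]
          ring
  calc bundleRevenue τ ≤ τ * (max 0 (2 - τ) / 2) := by
        rw [bundleRevenue_eq_mul_integral]
        gcongr
    _ ≤ 1 / 2 := by
        rcases max_cases 0 (2 - τ) with ⟨hmax, -⟩ | ⟨hmax, -⟩ <;> rw [hmax]
        · norm_num
        · nlinarith [sq_nonneg (τ - 1)]

lemma bundleRevenue_nonpos {τ : ℝ} (h : τ ≤ 0) : bundleRevenue τ ≤ 0 :=
  integral_nonpos fun _ => Set.indicator_nonpos (fun _ _ => h) _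

lemma sqrt_two_thirds : √(2 / 3) = √6 / 3 := by
  rw [show (2 / 3 : ℝ) = 6 / 3 ^ 2 by norm_num, Real.sqrt_div (by norm_num),
    Real.sqrt_sq (by norm_num)]

-- The maximizer of the cubic is `r = √(2/3)`, and the defect is `(τ - r)² (τ + 2r) / 2`.
lemma mul_one_sub_sq_div_two_le {τ : ℝ} (hτ : 0 ≤ τ) :
    τ * (1 - τ ^ 2 / 2) ≤ 2 * √6 / 9 := by
  have hr_sq : √(2 / 3 : ℝ) ^ 2 = 2 / 3 := Real.sq_sqrt (by norm_num)
  have hr : √(2 / 3) = √6 / 3 := sqrt_two_thirds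
  have h_defect : 0 ≤ (τ - √(2 / 3)) ^ 2 * (τ + 2 * √(2 / 3)) := by positivity
  linear_combination h_defect / 2 + (√(2 / 3) - 3 / 2 * τ) * hr_sq + 2 / 3 * hr

lemma bundleRevenue_le (τ : ℝ) : bundleRevenue τ ≤ 2 * √6 / 9 := by
  rcases le_total τ 0 with h₀ | h₀
  · exact (bundleRevenue_nonpos h₀).trans (by positivity)
  rcases le_total τ 1 with h₁ | h₁
  · exact bundleRevenue_of_le_one h₀ h₁ ▸ mul_one_sub_sq_div_two_le h₀
  · have h_sqrt : (2.4 : ℝ) ≤ √6 := Real.le_sqrt_of_sq_le (by norm_num)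
    linarith [bundleRevenue_le_half h₁]

lemma integrableOn_and_integral_le_of_mem_randomPostedPayments {g : ℝ → ℝ}
    (hg : g ∈ randomPostedPayments) :
    IntegrableOn (fun v : ℝ × ℝ => g (v.1 + v.2)) unitSquare ∧
      ∫ v in unitSquare, g (v.1 + v.2) ≤ 2 * √6 / 9 := by
  suffices h : randomPostedPayments ⊆ {g | IntegrableOn (fun v : ℝ × ℝ => g (v.1 + v.2)) unitSquare
      ∧ ∫ v in unitSquare, g (v.1 + v.2) ≤ 2 * √6 / 9} from h hg
  refine convexHull_min ?_ ?_
  · rintro _ ⟨τ, rfl⟩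
    exact ⟨integrableOn_postedPayment_add τ, bundleRevenue_le τ⟩
  · rintro g ⟨hg_int, hg_le⟩ h ⟨hh_int, hh_le⟩ c d hc hd hcd
    refine ⟨(hg_int.smul c).add (hh_int.smul d), ?_⟩
    calc ∫ v in unitSquare, (c • g + d • h) (v.1 + v.2)
        = c * (∫ v in unitSquare, g (v.1 + v.2)) + d * ∫ v in unitSquare, h (v.1 + v.2) := by
          rw [← integral_const_mul, ← integral_const_mul,
            ← integral_add (hg_int.const_mul c) (hh_int.const_mul d)]
          rfl
      _ ≤ c * (2 * √6 / 9) + d * (2 * √6 / 9) := by gcongr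
      _ = 2 * √6 / 9 := by rw [← add_mul, hcd, one_mul]

section Menus

variable {M : Finset ((ℝ × ℝ) × ℝ)}

lemma IsMenu.buyerPrice_nonneg (hM : IsMenu M) (v : ℝ × ℝ) : 0 ≤ buyerPrice M v := by
  refine Real.sSup_nonneg ?_
  rintro _ ⟨it, hit, rfl, -⟩
  exact (hM.2 it hit).2.2

lemma buyerPrice_le_s2 (hM : M.Nonempty) {v : ℝ × ℝ} {c : ℝ}
    (h : ∀ it ∈ M, (∀ it' ∈ M, util v it' ≤ util v it) → it.2 ≤ c) : buyerPrice M v ≤ c := by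
  obtain ⟨best, hbest, hmax⟩ := M.exists_max_image (util v) hM
  refine csSup_le ⟨best.2, best, hbest, rfl, hmax⟩ ?_
  rintro _ ⟨it, hit, rfl, hopt⟩
  exact h it hit hopt

lemma IsMenu.rev_le_of_le_randomPostedPayments (hM : IsMenu M) {g : ℝ → ℝ}
    (hg : g ∈ randomPostedPayments)
    (h : ∀ v ∈ unitSquare, ∀ it ∈ M, (∀ it' ∈ M, util v it' ≤ util v it) →
      it.2 ≤ g (v.1 + v.2)) :
    rev M ≤ 2 * √6 / 9 := by
  obtain ⟨hg_int, hg_le⟩ := integrableOn_and_integral_le_of_mem_randomPostedPayments hg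
  refine le_trans (integral_mono_of_nonneg (.of_forall hM.buyerPrice_nonneg) hg_int ?_) hg_le
  filter_upwards [ae_restrict_mem measurableSet_Icc] with v hv
  exact buyerPrice_le_s2 ⟨_, hM.1⟩ (h v hv)

lemma util_of_diagonal {it : (ℝ × ℝ) × ℝ} (h : it.1.1 = it.1.2) (v : ℝ × ℝ) :
    util v it = (v.1 + v.2) * it.1.1 - it.2 := by
  rw [util, ← h, add_mul]

theorem IsMenu.rev_le_of_diagonal (hM : IsMenu M) (hdiag : ∀ it ∈ M, it.1.1 = it.1.2) :
    rev M ≤ 2 * √6 / 9 := by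
  obtain ⟨g, hg, hbound⟩ := exists_price_le_mem_randomPostedPayments
    (a := fun it : (ℝ × ℝ) × ℝ => it.1.1) (p := fun it => it.2) hM.1 rfl rfl
    (fun it hit => (hM.2 it hit).1) (fun it hit => (hM.2 it hit).2.2)
  refine hM.rev_le_of_le_randomPostedPayments hg fun v hv it hit hopt => ?_
  refine hbound _ (add_nonneg hv.1.1 hv.1.2) it hit fun it' hit' => ?_
  rw [← util_of_diagonal (hdiag it hit), ← util_of_diagonal (hdiag it' hit')]
  exact hopt it' hit'

lemma IsMenu.price_le_add (hM : IsMenu M) {v : ℝ × ℝ} (hv : v ∈ unitSquare)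
    {it : (ℝ × ℝ) × ℝ} (hit : it ∈ M) (hopt : ∀ it' ∈ M, util v it' ≤ util v it) :
    it.2 ≤ v.1 + v.2 := by
  obtain ⟨⟨-, h₁⟩, ⟨-, h₂⟩, -⟩ := hM.2 it hit
  have h_rational : 0 ≤ util v it := by simpa [util] using hopt _ hM.1
  rw [util] at h_rational
  linarith [mul_le_of_le_one_right hv.1.1 h₁, mul_le_of_le_one_right hv.1.2 h₂]

theorem IsMenu.rev_le_of_price_eq_zero_or_eq (hM : IsMenu M) {p : ℝ} (hp : 0 ≤ p)
    (hprice : ∀ it ∈ M, it.2 = 0 ∨ it.2 = p) : rev M ≤ 2 * √6 / 9 := by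
  refine hM.rev_le_of_le_randomPostedPayments (postedPayment_mem_randomPostedPayments p)
    fun v hv it hit hopt => ?_
  rcases hprice it hit with h_zero | rfl
  · exact h_zero.trans_le (postedPayment_nonneg hp _)
  · exact (postedPayment_of_le (hM.price_le_add hv hit hopt)).ge

lemma IsMenu.eq_of_off_diagonal (hM : IsMenu M) (hS : SymmetricMenu M) (hcard : M.card ≤ 3)
    {u : (ℝ × ℝ) × ℝ} (hu : u ∈ M) (hne : u.1.1 ≠ u.1.2) :
    M = {((0, 0), 0), u, ((u.1.2, u.1.1), u.2)} := by
  symm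
  refine Finset.eq_of_subset_of_card_le ?_ (hcard.trans_eq (Eq.symm ?_))
  · simp only [Finset.insert_subset_iff, Finset.singleton_subset_iff]
    exact ⟨hM.1, hu, hS u hu⟩
  · refine Finset.card_eq_three.2 ⟨_, _, _, ?_, ?_, ?_, rfl⟩ <;> grind

lemma buyerPrice_bundle {τ : ℝ} (hτ : 0 ≤ τ) (v : ℝ × ℝ) :
    buyerPrice {((0, 0), 0), ((1, 1), τ)} v = postedPayment τ (v.1 + v.2) := by
  refine IsGreatest.csSup_eq ⟨?_, ?_⟩
  · rcases le_or_gt τ (v.1 + v.2) with h | h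
    · rw [postedPayment_of_le h]
      exact ⟨((1, 1), τ), by simp, rfl, by simpa [util] using h⟩
    · rw [postedPayment_of_lt h]
      exact ⟨((0, 0), 0), by simp, rfl, by simpa [util] using h.le⟩
  · rintro _ ⟨it, hit, rfl, hopt⟩
    rcases Finset.mem_insert.1 hit with rfl | hit
    · exact postedPayment_nonneg hτ _
    · obtain rfl := Finset.mem_singleton.1 hit
      have h : τ ≤ v.1 + v.2 := by simpa [util] using hopt ((0, 0), 0) (by simp)
      exact (postedPayment_of_le h).ge

lemma rev_bundle {τ : ℝ} (hτ : 0 ≤ τ) :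
    rev {((0, 0), 0), ((1, 1), τ)} = bundleRevenue τ :=
  integral_congr_ae (.of_forall (buyerPrice_bundle hτ))

end Menus

/-- every symmetric menu on `[0,1]²` with at most 3 items has
revenue at most `2√6/9` under the uniform distribution on `[0,1]²`, and this
bound is attained by the menu `{((0,0),0), ((1,1),√(2/3))}`. -/
theorem symmetric_three_menu_revenue_le :
    (∀ M : Finset ((ℝ × ℝ) × ℝ), IsMenu M → SymmetricMenu M → M.card ≤ 3 →
      rev M ≤ 2 * Real.sqrt 6 / 9) ∧
    rev {(((0 : ℝ), (0 : ℝ)), (0 : ℝ)),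
         (((1 : ℝ), (1 : ℝ)), Real.sqrt (2 / 3))} = 2 * Real.sqrt 6 / 9 := by
  constructor
  · intro M hM hS hcard
    by_cases hdiag : ∀ it ∈ M, it.1.1 = it.1.2
    · exact hM.rev_le_of_diagonal hdiag
    · push Not at hdiag
      obtain ⟨u, hu, hne⟩ := hdiag
      refine hM.rev_le_of_price_eq_zero_or_eq (hM.2 u hu).2.2 fun it hit => ?_
      rw [hM.eq_of_off_diagonal hS hcard hu hne] at hit
      simp only [Finset.mem_insert, Finset.mem_singleton] at hit
      rcases hit with rfl | rfl | rfl
      exacts [.inl rfl, .inr rfl, .inr rfl]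
  · have h_le_one : √(2 / 3 : ℝ) ≤ 1 := Real.sqrt_le_one.2 (by norm_num)
    rw [rev_bundle (Real.sqrt_nonneg _), bundleRevenue_of_le_one (Real.sqrt_nonneg _) h_le_one,
      Real.sq_sqrt (by norm_num), sqrt_two_thirds]
    ring
end
end

section
/- The menu M = {((0,0),0), ((1,1),sqrt(2/3))}, which posts price sqrt(2/3) for the bundle of both items, has revenue exactly 2*sqrt(6)/9 under the uniform distribution on [0,1]^2. -/
open MeasureTheory Real

noncomputable section

/-!
A buyer facing a single offer `((x₁, x₂), p)` pays `p` unless `v₁ x₁ + v₂ x₂ < p`. When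
`p ≤ min x₁ x₂`, the rejecting buyers form a right triangle with legs `p / x₁` and `p / x₂` lying
inside the unit square, so the revenue is `p * (1 - p² / (2 x₁ x₂))`.
-/

/-- The take-it-or-leave-it menu: the buyer either gets `it` at its price or leaves with the zero
item. -/
def takeItOrLeaveIt (it : (ℝ × ℝ) × ℝ) : Finset ((ℝ × ℝ) × ℝ) :=
  {((0, 0), 0), it}

/-- The values of the buyers who weakly prefer `it` to the zero item. Indifferent buyers are
included, in line with ties being broken in favour of the higher price. -/
def acceptanceRegion (it : (ℝ × ℝ) × ℝ) : Set (ℝ × ℝ) :=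
  {v | 0 ≤ util v it}

/-- The right triangle cut off from the nonnegative quadrant by the line `v₁ * a + v₂ * b = c`,
without its hypotenuse. It serves as the region of rejecting buyers. -/
def cornerTriangle (a b c : ℝ) : Set (ℝ × ℝ) :=
  {v | 0 ≤ v.1 ∧ 0 ≤ v.2 ∧ v.1 * a + v.2 * b < c}

lemma util_zero_item (v : ℝ × ℝ) : util v ((0, 0), 0) = 0 := by
  simp [util]

lemma buyerPrice_eq_of_mem {M : Finset ((ℝ × ℝ) × ℝ)} {v : ℝ × ℝ} {it : (ℝ × ℝ) × ℝ}
    (hit : it ∈ M) (hmax : ∀ it' ∈ M, util v it' ≤ util v it)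
    (hprice : ∀ it' ∈ M, util v it ≤ util v it' → it'.2 ≤ it.2) :
    buyerPrice M v = it.2 := by
  refine IsGreatest.csSup_eq ⟨⟨it, hit, rfl, hmax⟩, ?_⟩
  rintro _ ⟨it', hit', rfl, hmax'⟩
  exact hprice it' hit' (hmax' it hit)

lemma buyerPrice_takeItOrLeaveIt {it : (ℝ × ℝ) × ℝ} (hp : 0 ≤ it.2) (v : ℝ × ℝ) :
    buyerPrice (takeItOrLeaveIt it) v = (acceptanceRegion it).indicator (fun _ ↦ it.2) v := by
  by_cases hv : v ∈ acceptanceRegion it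
  · rw [Set.indicator_of_mem hv]
    have hutil : 0 ≤ util v it := hv
    apply buyerPrice_eq_of_mem <;> simp [takeItOrLeaveIt, util_zero_item, hutil, hp]
  · rw [Set.indicator_of_notMem hv]
    have hutil : util v it < 0 := not_le.mp hv
    apply buyerPrice_eq_of_mem (it := ((0, 0), 0)) <;>
      simp [takeItOrLeaveIt, util_zero_item, hutil, hutil.le]

lemma measurableSet_acceptanceRegion (it : (ℝ × ℝ) × ℝ) :
    MeasurableSet (acceptanceRegion it) := by
  have hutil : Measurable fun v ↦ util v it := by unfold util; fun_prop
  exact measurableSet_le measurable_const hutil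

lemma rev_takeItOrLeaveIt {it : (ℝ × ℝ) × ℝ} (hp : 0 ≤ it.2) :
    rev (takeItOrLeaveIt it) = it.2 * volume.real (unitSquare ∩ acceptanceRegion it) := by
  simp only [rev, buyerPrice_takeItOrLeaveIt hp]
  rw [setIntegral_indicator (measurableSet_acceptanceRegion it), setIntegral_const, smul_eq_mul,
    mul_comm]

lemma volume_real_unitSquare : volume.real unitSquare = 1 := by
  rw [unitSquare, ← Set.Icc_prod_Icc, Measure.volume_eq_prod, measureReal_prod_prod]
  simp

section Triangle

variable {a b c : ℝ}

lemma volume_cornerTriangle_section (ha : 0 < a) (hb : 0 < b) (x : ℝ) :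
    volume (Prod.mk x ⁻¹' cornerTriangle a b c) =
      (Set.Icc 0 (c / a)).indicator (fun x ↦ ENNReal.ofReal ((c - x * a) / b)) x := by
  rcases lt_or_ge x 0 with hx | hx
  · simp [cornerTriangle, hx.not_ge]
  have hsection : Prod.mk x ⁻¹' cornerTriangle a b c = Set.Ico 0 ((c - x * a) / b) := by
    ext y
    simp [cornerTriangle, hx, lt_div_iff₀ hb, lt_sub_iff_add_lt']
  rw [hsection, Real.volume_Ico, sub_zero]
  by_cases hxc : x ≤ c / a
  · rw [Set.indicator_of_mem (Set.mem_Icc.mpr ⟨hx, hxc⟩)]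
  · rw [Set.indicator_of_notMem fun h ↦ hxc h.2]
    have hlt : c < x * a := (div_lt_iff₀ ha).mp (not_le.mp hxc)
    exact ENNReal.ofReal_of_nonpos (div_nonpos_of_nonpos_of_nonneg (by linarith) hb.le)

lemma integral_cornerTriangle_section (ha : a ≠ 0) :
    ∫ x in 0..c / a, (c - x * a) / b = c ^ 2 / (2 * a * b) := by
  rw [intervalIntegral.integral_div, intervalIntegral.integral_sub (by simp)
    (Continuous.intervalIntegrable (by fun_prop) _ _), intervalIntegral.integral_mul_const,
    intervalIntegral.integral_const, integral_id, smul_eq_mul]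
  field_simp
  ring

lemma measurableSet_cornerTriangle : MeasurableSet (cornerTriangle a b c) := by
  unfold cornerTriangle
  measurability

lemma volume_real_cornerTriangle (ha : 0 < a) (hb : 0 < b) (hc : 0 ≤ c) :
    volume.real (cornerTriangle a b c) = c ^ 2 / (2 * a * b) := by
  have hlength_nonneg : ∀ x ∈ Set.Icc 0 (c / a), 0 ≤ (c - x * a) / b := fun x hx ↦
    div_nonneg (sub_nonneg.mpr ((le_div_iff₀ ha).mp hx.2)) hb.le
  have hlength_integrable : IntegrableOn (fun x ↦ (c - x * a) / b) (Set.Icc 0 (c / a)) :=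
    Continuous.integrableOn_Icc (by fun_prop)
  rw [measureReal_def, Measure.volume_eq_prod, Measure.prod_apply measurableSet_cornerTriangle]
  simp only [volume_cornerTriangle_section ha hb]
  rw [lintegral_indicator measurableSet_Icc,
    ← ofReal_integral_eq_lintegral_ofReal hlength_integrable
      (ae_restrict_of_forall_mem measurableSet_Icc hlength_nonneg),
    integral_Icc_eq_integral_Ioc, ← intervalIntegral.integral_of_le (by positivity),
    integral_cornerTriangle_section ha.ne', ENNReal.toReal_ofReal (by positivity)]

end Triangle

section SmallPrice

variable {x₁ x₂ p : ℝ}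

lemma unitSquare_sdiff_acceptanceRegion (hx₁ : 0 < x₁) (hx₂ : 0 < x₂) (hp₁ : p ≤ x₁)
    (hp₂ : p ≤ x₂) :
    unitSquare \ acceptanceRegion ((x₁, x₂), p) = cornerTriangle x₁ x₂ p := by
  ext ⟨v₁, v₂⟩
  simp only [acceptanceRegion, cornerTriangle, util, Set.mem_sdiff, Set.mem_Icc, Prod.mk_le_mk,
    Set.mem_ofPred_eq, not_le, sub_neg]
  constructor
  · rintro ⟨⟨⟨hv₁, hv₂⟩, -⟩, hreject⟩
    exact ⟨hv₁, hv₂, hreject⟩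
  · rintro ⟨hv₁, hv₂, hreject⟩
    have hv₁_le : v₁ ≤ 1 :=
      le_of_mul_le_mul_right (by linarith [mul_nonneg hv₂ hx₂.le]) hx₁
    have hv₂_le : v₂ ≤ 1 :=
      le_of_mul_le_mul_right (by linarith [mul_nonneg hv₁ hx₁.le]) hx₂
    exact ⟨⟨⟨hv₁, hv₂⟩, hv₁_le, hv₂_le⟩, hreject⟩

lemma volume_real_unitSquare_inter_acceptanceRegion (hx₁ : 0 < x₁) (hx₂ : 0 < x₂) (hp : 0 ≤ p)
    (hp₁ : p ≤ x₁) (hp₂ : p ≤ x₂) :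
    volume.real (unitSquare ∩ acceptanceRegion ((x₁, x₂), p)) = 1 - p ^ 2 / (2 * x₁ * x₂) := by
  have hsplit := measureReal_inter_add_sdiff (μ := volume) (s := unitSquare)
    (measurableSet_acceptanceRegion ((x₁, x₂), p)) isCompact_Icc.measure_ne_top
  rw [unitSquare_sdiff_acceptanceRegion hx₁ hx₂ hp₁ hp₂, volume_real_cornerTriangle hx₁ hx₂ hp,
    volume_real_unitSquare] at hsplit
  exact eq_sub_of_add_eq hsplit

theorem rev_takeItOrLeaveIt_of_le (hx₁ : 0 < x₁) (hx₂ : 0 < x₂) (hp : 0 ≤ p) (hp₁ : p ≤ x₁)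
    (hp₂ : p ≤ x₂) :
    rev (takeItOrLeaveIt ((x₁, x₂), p)) = p * (1 - p ^ 2 / (2 * x₁ * x₂)) := by
  rw [rev_takeItOrLeaveIt hp, volume_real_unitSquare_inter_acceptanceRegion hx₁ hx₂ hp hp₁ hp₂]

end SmallPrice

/-- the menu `{((0,0),0), ((1,1),√(2/3))}`, posting price `√(2/3)`
for the bundle, has revenue exactly `2√6/9` under the uniform distribution on
`[0,1]²`. -/
theorem bundle_menu_revenue :
    rev {(((0 : ℝ), (0 : ℝ)), (0 : ℝ)),
         (((1 : ℝ), (1 : ℝ)), Real.sqrt (2 / 3))} = 2 * Real.sqrt 6 / 9 := by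
  have hprice_le : √(2 / 3) ≤ 1 := Real.sqrt_le_one.mpr (by norm_num)
  have hsqrt : √(2 / 3) = √6 / 3 := by
    rw [show (2 / 3 : ℝ) = 6 / 3 ^ 2 by norm_num, Real.sqrt_div (by norm_num),
      Real.sqrt_sq (by norm_num)]
  calc rev (takeItOrLeaveIt ((1, 1), √(2 / 3)))
      = √(2 / 3) * (1 - √(2 / 3) ^ 2 / (2 * 1 * 1)) :=
        rev_takeItOrLeaveIt_of_le one_pos one_pos (Real.sqrt_nonneg _) hprice_le hprice_le
    _ = √(2 / 3) * (1 - 2 / 3 / (2 * 1 * 1)) := by rw [Real.sq_sqrt (by norm_num)]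
    _ = 2 * √6 / 9 := by rw [hsqrt]; ring
end
end

section
/- Let 0 ≤ q < p ≤ 1 and δ ∈ [0,1) satisfy (p − q)/(1 − δ) < 1 and (q − δ*p)/(1 − δ) < 1. Then the menu M = {((0,0),0), ((1,1),p), ((1,δ),q)} has revenue at most 59/108 under the uniform distribution on [0,1]^2, with equality exactly when δ = 0, q = 2/3 and p = 5/6. -/
open MeasureTheory Real

noncomputable section

/-! Put `a = (p - q) / (1 - δ)` and `b = (q - δ p) / (1 - δ)`, so that `p = a + b` and
`q = b + δ a`. A buyer of value `(x, y)` prefers the bundle to `((1, δ), q)` exactly when `a ≤ y`,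
and buys as soon as `x ≥ min (p - y) (q - δ y)`; integrating over `x` and then over `y` gives the
revenue in closed form.

If `b ≥ 0`, the revenue is a concave quadratic in `δ` whose vertex is `(1 - 3 b / 2) / a`. According
to the position of the vertex relative to `[0, 1]`, the revenue is compared with its value at
`δ = 0`, at the vertex, or at `δ = 1`, the last being the revenue `p - p ^ 3 / 2` of selling only
the bundle. Only the first case reaches `59 / 108`. If `b < 0`, the revenue is again at most
`p - p ^ 3 / 2 < 59 / 108`. -/

section Integrals

variable {s t u w : ℝ}

theorem setIntegral_Icc_ite_le {c : ℝ} (hst : s ≤ t) (hct : c ≤ t) (r : ℝ) :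
    ∫ x in Set.Icc s t, (if c ≤ x then r else 0) = r * (t - max s c) := by
  have h_indicator : (fun x : ℝ => if c ≤ x then r else 0) =
      (Set.Ici c).indicator fun _ => r := by
    ext x
    simp [Set.indicator]
  have h_inter : Set.Icc s t ∩ Set.Ici c = Set.Icc (max s c) t := by
    ext x
    simp only [Set.mem_inter_iff, Set.mem_Icc, Set.mem_Ici, max_le_iff]
    tauto
  rw [h_indicator, setIntegral_indicator measurableSet_Ici, h_inter, setIntegral_const,
    Real.volume_real_Icc_of_le (max_le hst hct), smul_eq_mul, mul_comm]

theorem setIntegral_Icc_prod_ite_le {c r : ℝ → ℝ} (hst : s ≤ t) (hc : Measurable c)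
    (hct : ∀ y ∈ Set.Icc u w, c y ≤ t) (hr : IntegrableOn r (Set.Icc u w)) :
    ∫ v in Set.Icc (s, u) (t, w), (if c v.2 ≤ v.1 then r v.2 else 0) =
      ∫ y in Set.Icc u w, r y * (t - max s (c y)) := by
  have h_meas : MeasurableSet {v : ℝ × ℝ | c v.2 ≤ v.1} :=
    measurableSet_le (by fun_prop) (by fun_prop)
  have h_int : Integrable (fun v : ℝ × ℝ => if c v.2 ≤ v.1 then r v.2 else 0)
      ((volume.restrict (Set.Icc s t)).prod (volume.restrict (Set.Icc u w))) := by
    refine ((hr.comp_snd (volume.restrict (Set.Icc s t))).indicator h_meas).congr ?_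
    exact .of_forall fun v => by simp [Set.indicator]
  rw [← Set.Icc_prod_Icc, Measure.volume_eq_prod, ← Measure.prod_restrict,
    integral_prod_symm _ h_int]
  exact setIntegral_congr_fun measurableSet_Icc fun y hy =>
    setIntegral_Icc_ite_le hst (hct y hy) (r y)

theorem intervalIntegral_ite_le {f g : ℝ → ℝ} {c : ℝ} (hsc : s ≤ c) (hct : c ≤ t)
    (hf : IntervalIntegrable f volume c t) (hg : IntervalIntegrable g volume s c) :
    ∫ y in s..t, (if c ≤ y then f y else g y) = (∫ y in s..c, g y) + ∫ y in c..t, f y := by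
  have hg_eq : Set.EqOn g (fun y => if c ≤ y then f y else g y) (Set.uIoo s c) := by
    intro y hy
    rw [Set.uIoo_of_le hsc] at hy
    simp [hy.2]
  have hf_eq : Set.EqOn f (fun y => if c ≤ y then f y else g y) (Set.uIoo c t) := by
    intro y hy
    rw [Set.uIoo_of_le hct] at hy
    simp [hy.1.le]
  rw [← intervalIntegral.integral_add_adjacent_intervals (hg.congr_uIoo hg_eq)
    (hf.congr_uIoo hf_eq), intervalIntegral.integral_congr_uIoo hg_eq,
    intervalIntegral.integral_congr_uIoo hf_eq]

theorem hasDerivAt_max_zero_sq_div_two {x : ℝ} (hx : x ≠ 0) :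
    HasDerivAt (fun x : ℝ => max 0 x ^ 2 / 2) (max 0 x) x := by
  rcases hx.lt_or_gt with hneg | hpos
  · rw [max_eq_left hneg.le]
    refine (hasDerivAt_const x (0 : ℝ)).congr_of_eventuallyEq ?_
    filter_upwards [eventually_lt_nhds hneg] with y hy
    simp [hy.le]
  · have h_sq : HasDerivAt (fun y : ℝ => y ^ 2 / 2) x x := by
      simpa using (hasDerivAt_pow 2 x).div_const 2
    rw [max_eq_right hpos.le]
    refine h_sq.congr_of_eventuallyEq ?_
    filter_upwards [eventually_gt_nhds hpos] with y hy
    rw [max_eq_right hy.le]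

theorem integral_max_zero : ∫ x in s..t, max 0 x = (max 0 t ^ 2 - max 0 s ^ 2) / 2 := by
  rw [integral_eq_of_hasDerivAt_off_countable (fun x : ℝ => max 0 x ^ 2 / 2) (fun x => max 0 x)
    (Set.countable_singleton 0) (by fun_prop)
    (fun x hx => hasDerivAt_max_zero_sq_div_two hx.2)
    (Continuous.intervalIntegrable (by fun_prop) s t)]
  ring

theorem integral_max_zero_sub_mul (c : ℝ) {d : ℝ} (hd : d ≠ 0) :
    ∫ y in s..t, max 0 (c - d * y) =
      (max 0 (c - d * s) ^ 2 - max 0 (c - d * t) ^ 2) / (2 * d) := by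
  rw [intervalIntegral.integral_comp_sub_mul (fun x => max 0 x) hd, integral_max_zero, smul_eq_mul]
  field_simp

end Integrals

section Revenue

theorem buyerPrice_eq {M : Finset ((ℝ × ℝ) × ℝ)} {v : ℝ × ℝ} {it : (ℝ × ℝ) × ℝ} (hit : it ∈ M)
    (h_max : ∀ it' ∈ M, util v it' ≤ util v it)
    (h_tie : ∀ it' ∈ M, util v it ≤ util v it' → it'.2 ≤ it.2) : buyerPrice M v = it.2 := by
  refine IsGreatest.csSup_eq ⟨⟨it, hit, rfl, h_max⟩, ?_⟩
  rintro _ ⟨it', hit', rfl, h_max'⟩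
  exact h_tie it' hit' (h_max' it hit)

/-- The menu of the theorem: besides the zero item, it offers the bundle at price `p` and the
allocation `(1, δ)` at price `q`. -/
def threeMenu (p q δ : ℝ) : Finset ((ℝ × ℝ) × ℝ) :=
  {((0, 0), 0), ((1, 1), p), ((1, δ), q)}

theorem forall_mem_threeMenu {p q δ : ℝ} {P : (ℝ × ℝ) × ℝ → Prop} :
    (∀ it ∈ threeMenu p q δ, P it) ↔ P ((0, 0), 0) ∧ P ((1, 1), p) ∧ P ((1, δ), q) := by
  simp [threeMenu]

theorem buyerPrice_threeMenu {p q : ℝ} (δ : ℝ) (hq : 0 ≤ q) (hqp : q ≤ p) (v : ℝ × ℝ) :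
    buyerPrice (threeMenu p q δ) v =
      if min (p - v.2) (q - δ * v.2) ≤ v.1 then
        if p - v.2 ≤ q - δ * v.2 then p else q
      else 0 := by
  split_ifs with h_buy h_bundle
  · rw [min_eq_left h_bundle] at h_buy
    refine buyerPrice_eq (it := ((1, 1), p)) (by simp [threeMenu]) ?_ ?_ <;>
      simp only [forall_mem_threeMenu, util] <;> grind
  · rw [min_eq_right (not_le.mp h_bundle).le] at h_buy
    refine buyerPrice_eq (it := ((1, δ), q)) (by simp [threeMenu]) ?_ ?_ <;>
      simp only [forall_mem_threeMenu, util] <;> grind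
  · obtain ⟨h_not_bundle, h_not_discount⟩ := lt_min_iff.mp (not_le.mp h_buy)
    refine buyerPrice_eq (it := ((0, 0), 0)) (by simp [threeMenu]) ?_ ?_ <;>
      simp only [forall_mem_threeMenu, util] <;> grind

theorem rev_threeMenu_eq_integral {p q : ℝ} (δ : ℝ) (hq : 0 ≤ q) (hqp : q ≤ p) (hp : p ≤ 1) :
    rev (threeMenu p q δ) = ∫ y in (0 : ℝ)..1,
      (if p - y ≤ q - δ * y then p else q) * (1 - max 0 (min (p - y) (q - δ * y))) := by
  have h_price : IntegrableOn (fun y : ℝ => if p - y ≤ q - δ * y then p else q) (Set.Icc 0 1) :=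
    Integrable.piecewise (s := {y : ℝ | p - y ≤ q - δ * y})
      (measurableSet_le (by fun_prop) (by fun_prop)) (integrable_const p).integrableOn
      (integrable_const q).integrableOn
  have h_cutoff (y : ℝ) (hy : y ∈ Set.Icc (0 : ℝ) 1) : min (p - y) (q - δ * y) ≤ 1 :=
    (min_le_left _ _).trans (by linarith [hy.1])
  simp_rw [rev, buyerPrice_threeMenu δ hq hqp]
  rw [setIntegral_Icc_prod_ite_le (c := fun y => min (p - y) (q - δ * y)) zero_le_one
    (by fun_prop) h_cutoff h_price, integral_Icc_eq_integral_Ioc,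
    intervalIntegral.integral_of_le zero_le_one]

variable {a b δ : ℝ}

theorem rev_threeMenu (ha : 0 ≤ a) (ha1 : a ≤ 1) (hq : 0 ≤ b + δ * a) (hp : a + b ≤ 1)
    (hδ : δ < 1) :
    rev (threeMenu (a + b) (b + δ * a) δ) = (a + b) * (1 - a - max 0 b ^ 2 / 2) +
      (b + δ * a) * (a - ∫ y in (0 : ℝ)..a, max 0 (b + δ * a - δ * y)) := by
  have h_upgrade (y : ℝ) : a + b - y ≤ b + δ * a - δ * y ↔ a ≤ y := by
    rw [← mul_le_mul_iff_of_pos_right (sub_pos.mpr hδ) (b := a)]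
    constructor <;> intro h <;> linarith
  have h_split (y : ℝ) :
      (if a + b - y ≤ b + δ * a - δ * y then a + b else b + δ * a) *
          (1 - max 0 (min (a + b - y) (b + δ * a - δ * y))) =
        if a ≤ y then (a + b) * (1 - max 0 (a + b - y))
        else (b + δ * a) * (1 - max 0 (b + δ * a - δ * y)) := by
    by_cases h : a ≤ y
    · simp [h_upgrade, h]
    · simp [h_upgrade, h, min_eq_right (not_le.mp (mt (h_upgrade y).mp h)).le]
  have h_bundle : ∫ y in a..1, max 0 (a + b - y) = max 0 b ^ 2 / 2 := by
    have h := integral_max_zero_sub_mul (s := a) (t := 1) (a + b) one_ne_zero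
    simpa [max_eq_left (sub_nonpos.mpr hp)] using h
  rw [rev_threeMenu_eq_integral δ hq (by nlinarith) hp]
  simp_rw [h_split]
  rw [intervalIntegral_ite_le ha ha1 (Continuous.intervalIntegrable (by fun_prop) _ _)
      (Continuous.intervalIntegrable (by fun_prop) _ _),
    intervalIntegral.integral_const_mul, intervalIntegral.integral_const_mul,
    intervalIntegral.integral_sub (by simp) (Continuous.intervalIntegrable (by fun_prop) _ _),
    intervalIntegral.integral_sub (by simp) (Continuous.intervalIntegrable (by fun_prop) _ _),
    h_bundle]
  simp only [intervalIntegral.integral_const, smul_eq_mul]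
  ring

/-- The revenue of `threeMenu (a + b) (b + δ * a) δ` for `0 ≤ b`, when the values `(x, y)` with
`y ≤ a` that buy nothing form a trapezoid with vertices `(0, 0)`, `(b + δ * a, 0)`, `(b, a)`,
`(0, a)`. -/
def trapezoidRevenue (a b δ : ℝ) : ℝ :=
  (a + b) * (1 - a - b ^ 2 / 2) + (b + δ * a) * (a * (1 - b - δ * a / 2))

theorem rev_threeMenu_of_nonneg (ha : 0 ≤ a) (ha1 : a ≤ 1) (hb : 0 ≤ b) (hp : a + b ≤ 1)
    (hδ : 0 ≤ δ) (hδ1 : δ < 1) :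
    rev (threeMenu (a + b) (b + δ * a) δ) = trapezoidRevenue a b δ := by
  have hq : 0 ≤ b + δ * a := by positivity
  have h_area : ∫ y in (0 : ℝ)..a, max 0 (b + δ * a - δ * y) = a * (b + δ * a / 2) := by
    rcases eq_or_ne δ 0 with rfl | hδ_ne
    · simp [hb]
    · rw [integral_max_zero_sub_mul _ hδ_ne, mul_zero, sub_zero, add_sub_cancel_right,
        max_eq_right hq, max_eq_right hb]
      field
  rw [rev_threeMenu ha ha1 hq hp hδ1, h_area, max_eq_right hb, trapezoidRevenue]
  ring

theorem rev_threeMenu_of_nonpos (ha : 0 ≤ a) (ha1 : a ≤ 1) (hb : b ≤ 0) (hq : 0 ≤ b + δ * a)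
    (hp : a + b ≤ 1) (hδ : 0 < δ) (hδ1 : δ < 1) :
    rev (threeMenu (a + b) (b + δ * a) δ) =
      (a + b) * (1 - a) + (b + δ * a) * (a - (b + δ * a) ^ 2 / (2 * δ)) := by
  rw [rev_threeMenu ha ha1 hq hp hδ1, integral_max_zero_sub_mul _ hδ.ne', mul_zero, sub_zero,
    add_sub_cancel_right, max_eq_right hq, max_eq_left hb]
  ring

end Revenue

section Optimization

-- The tangent at `49 / 60`, a rational just above the maximiser `√(2 / 3)`, bounds the cubic.
theorem sub_cube_div_two_lt {p : ℝ} (hp : 0 ≤ p) : p - p ^ 3 / 2 < 59 / 108 := by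
  have h_tangent : 0 ≤ (p - 49 / 60) ^ 2 * (p + 49 / 30) := by positivity
  linarith

variable {a b δ : ℝ}

theorem trapezoidRevenue_le_of_two_thirds_le (ha : 0 ≤ a) (hb : 2 / 3 ≤ b) (hδ : 0 ≤ δ) :
    trapezoidRevenue a b δ ≤
      59 / 108 - (a + b - 5 / 6) ^ 2 - 3 / 2 * a * (b - 2 / 3) ^ 2 - a ^ 3 / 2 * δ ^ 2 := by
  have : 0 ≤ b - 2 / 3 := sub_nonneg.mpr hb
  calc trapezoidRevenue a b δ
      = 59 / 108 - (a + b - 5 / 6) ^ 2 - 3 / 2 * a * (b - 2 / 3) ^ 2 - a ^ 3 / 2 * δ ^ 2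
        - ((b - 2 / 3) ^ 3 / 2 + 3 / 2 * a ^ 2 * (b - 2 / 3) * δ) := by
        rw [trapezoidRevenue]; ring
    _ ≤ _ := sub_le_self _ (by positivity)

-- The square containing `δ` vanishes at the vertex of the quadratic in `δ`.
theorem trapezoidRevenue_lt_of_lt_two_thirds_of_le (ha : 0 ≤ a) (hb : b < 2 / 3)
    (hab : 1 - 3 * b / 2 ≤ a) : trapezoidRevenue a b δ < 59 / 108 := by
  have h_coeff : 0 < (b - 2 / 3) / 2 + 3 / 8 * a := by linarith
  have h_sq : 0 < (b - 2 / 3) ^ 2 := sq_pos_of_neg (sub_neg.mpr hb)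
  calc trapezoidRevenue a b δ
      = 59 / 108 - ((a + b - 5 / 6) ^ 2 + (b - 2 / 3) ^ 2 * ((b - 2 / 3) / 2 + 3 / 8 * a)
        + a / 2 * (a * δ - (1 - 3 * b / 2)) ^ 2) := by
        rw [trapezoidRevenue]; ring
    _ < 59 / 108 := sub_lt_self _ (by positivity)

theorem trapezoidRevenue_le_bundle (ha : 0 ≤ a) (hab : a ≤ 1 - 3 * b / 2) (hδ1 : δ ≤ 1) :
    trapezoidRevenue a b δ ≤ (a + b) - (a + b) ^ 3 / 2 := by
  have h_vertex : 0 ≤ 1 - 3 * b / 2 - (1 + δ) * a / 2 := by nlinarith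
  have : 0 ≤ 1 - δ := sub_nonneg.mpr hδ1
  calc trapezoidRevenue a b δ
      = (a + b) - (a + b) ^ 3 / 2
        - a ^ 2 * (1 - δ) * (1 - 3 * b / 2 - (1 + δ) * a / 2) := by
        rw [trapezoidRevenue]; ring
    _ ≤ (a + b) - (a + b) ^ 3 / 2 := sub_le_self _ (by positivity)

theorem trapezoidRevenue_lt_of_lt_two_thirds (ha : 0 ≤ a) (hb : 0 ≤ b) (hb' : b < 2 / 3)
    (hδ1 : δ ≤ 1) : trapezoidRevenue a b δ < 59 / 108 := by
  rcases le_total (1 - 3 * b / 2) a with h | h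
  · exact trapezoidRevenue_lt_of_lt_two_thirds_of_le ha hb' h
  · exact (trapezoidRevenue_le_bundle ha h hδ1).trans_lt (sub_cube_div_two_lt (by positivity))

theorem trapezoidRevenue_le (ha : 0 ≤ a) (hb : 0 ≤ b) (hδ : 0 ≤ δ) (hδ1 : δ ≤ 1) :
    trapezoidRevenue a b δ ≤ 59 / 108 := by
  rcases lt_or_ge b (2 / 3) with hb' | hb'
  · exact (trapezoidRevenue_lt_of_lt_two_thirds ha hb hb' hδ1).le
  · have h_sq : 0 ≤ (a + b - 5 / 6) ^ 2 + 3 / 2 * a * (b - 2 / 3) ^ 2 + a ^ 3 / 2 * δ ^ 2 := by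
      positivity
    linarith [trapezoidRevenue_le_of_two_thirds_le ha hb' hδ]

theorem trapezoidRevenue_eq_iff (ha : 0 < a) (hb : 0 ≤ b) (hδ : 0 ≤ δ) (hδ1 : δ ≤ 1) :
    trapezoidRevenue a b δ = 59 / 108 ↔ δ = 0 ∧ b = 2 / 3 ∧ a = 1 / 6 := by
  constructor
  · intro h
    have hb' : 2 / 3 ≤ b := not_lt.mp fun hlt =>
      (trapezoidRevenue_lt_of_lt_two_thirds ha.le hb hlt hδ1).ne h
    have h_le := trapezoidRevenue_le_of_two_thirds_le ha.le hb' hδ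
    have h_sum : 0 ≤ (a + b - 5 / 6) ^ 2 := sq_nonneg _
    have h_b : 0 ≤ 3 / 2 * a * (b - 2 / 3) ^ 2 := by positivity
    have h_δ : 0 ≤ a ^ 3 / 2 * δ ^ 2 := by positivity
    have h_sum_eq : a + b - 5 / 6 = 0 := pow_eq_zero_iff two_ne_zero |>.mp (by linarith)
    have h_b_eq : 3 / 2 * a * (b - 2 / 3) ^ 2 = 0 := by linarith
    have h_δ_eq : a ^ 3 / 2 * δ ^ 2 = 0 := by linarith
    have hb_eq : b - 2 / 3 = 0 := by simpa [ha.ne'] using h_b_eq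
    have hδ_eq : δ = 0 := by simpa [ha.ne'] using h_δ_eq
    exact ⟨hδ_eq, by linarith, by linarith⟩
  · rintro ⟨rfl, rfl, rfl⟩
    norm_num [trapezoidRevenue]

-- Bounding `q ^ 3` below by its tangent at `δ p`, the value of `q` at `b = 0`, removes the cube.
theorem revenue_le_bundle_of_nonpos (hb : b ≤ 0) (hq : 0 ≤ b + δ * a) (hp0 : 0 ≤ a + b)
    (hp : a + b ≤ 1) (hδ : 0 < δ) (hδ1 : δ ≤ 1) :
    (a + b) * (1 - a) + (b + δ * a) * (a - (b + δ * a) ^ 2 / (2 * δ)) ≤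
      (a + b) - (a + b) ^ 3 / 2 := by
  obtain ⟨p, rfl⟩ : ∃ p, a = p - b := ⟨a + b, by ring⟩
  rw [sub_add_cancel] at hp0 hp ⊢
  set q := b + δ * (p - b) with hq_def
  have h_tangent : 3 * (δ * p) ^ 2 * q - 2 * (δ * p) ^ 3 ≤ q ^ 3 := by
    have : 0 ≤ (q - δ * p) ^ 2 * (q + 2 * (δ * p)) := by positivity
    linarith
  have h_cube : (3 * δ * p ^ 2 * q - 2 * δ ^ 2 * p ^ 3) / 2 ≤ q * (q ^ 2 / (2 * δ)) := by
    rw [mul_div_assoc', le_div_iff₀ (by positivity)]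
    linarith
  have h_slack : 0 ≤ (1 - δ) * (p ^ 2 * (1 - p * (1 + δ) / 2) +
      (-b) * (p * (2 - 3 / 2 * (δ * p))) + b ^ 2) := by
    have hδp : p * δ ≤ 1 := mul_le_one₀ hp hδ.le hδ1
    have h_quad : 0 ≤ 1 - p * (1 + δ) / 2 := by linarith
    have h_lin : 0 ≤ 2 - 3 / 2 * (δ * p) := by linarith
    have : 0 ≤ 1 - δ := sub_nonneg.mpr hδ1
    have h_neg : 0 ≤ -b := neg_nonneg.mpr hb
    positivity
  calc p * (1 - (p - b)) + q * ((p - b) - q ^ 2 / (2 * δ))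
      = p * (1 - (p - b)) + q * (p - b) - q * (q ^ 2 / (2 * δ)) := by ring
    _ ≤ p * (1 - (p - b)) + q * (p - b) - (3 * δ * p ^ 2 * q - 2 * δ ^ 2 * p ^ 3) / 2 :=
        sub_le_sub_left h_cube _
    _ = p - p ^ 3 / 2 - (1 - δ) * (p ^ 2 * (1 - p * (1 + δ) / 2) +
          (-b) * (p * (2 - 3 / 2 * (δ * p))) + b ^ 2) := by rw [hq_def]; ring
    _ ≤ p - p ^ 3 / 2 := sub_le_self _ h_slack

end Optimization

section Bounds

variable {a b δ : ℝ}

theorem rev_threeMenu_lt_of_neg (ha : 0 ≤ a) (ha1 : a ≤ 1) (hb : b < 0) (hq : 0 ≤ b + δ * a)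
    (hp : a + b ≤ 1) (hδ : 0 ≤ δ) (hδ1 : δ < 1) :
    rev (threeMenu (a + b) (b + δ * a) δ) < 59 / 108 := by
  have hp0 : 0 ≤ a + b := by linarith [mul_le_of_le_one_left ha hδ1.le]
  have hδ_pos : 0 < δ := hδ.lt_of_ne' (by rintro rfl; linarith)
  rw [rev_threeMenu_of_nonpos ha ha1 hb.le hq hp hδ_pos hδ1]
  exact (revenue_le_bundle_of_nonpos hb.le hq hp0 hp hδ_pos hδ1.le).trans_lt
    (sub_cube_div_two_lt hp0)

theorem rev_threeMenu_le (ha : 0 ≤ a) (ha1 : a ≤ 1) (hq : 0 ≤ b + δ * a) (hp : a + b ≤ 1)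
    (hδ : 0 ≤ δ) (hδ1 : δ < 1) : rev (threeMenu (a + b) (b + δ * a) δ) ≤ 59 / 108 := by
  rcases lt_or_ge b 0 with hb | hb
  · exact (rev_threeMenu_lt_of_neg ha ha1 hb hq hp hδ hδ1).le
  · rw [rev_threeMenu_of_nonneg ha ha1 hb hp hδ hδ1]
    exact trapezoidRevenue_le ha hb hδ hδ1.le

theorem rev_threeMenu_eq_iff (ha : 0 < a) (ha1 : a ≤ 1) (hq : 0 ≤ b + δ * a) (hp : a + b ≤ 1)
    (hδ : 0 ≤ δ) (hδ1 : δ < 1) :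
    rev (threeMenu (a + b) (b + δ * a) δ) = 59 / 108 ↔
      δ = 0 ∧ b + δ * a = 2 / 3 ∧ a + b = 5 / 6 := by
  rcases lt_or_ge b 0 with hb | hb
  · refine iff_of_false (rev_threeMenu_lt_of_neg ha.le ha1 hb hq hp hδ hδ1).ne ?_
    rintro ⟨rfl, -, -⟩
    linarith
  · rw [rev_threeMenu_of_nonneg ha.le ha1 hb hp hδ hδ1, trapezoidRevenue_eq_iff ha hb hδ hδ1.le]
    refine and_congr_right ?_
    rintro rfl
    constructor <;> rintro ⟨h₁, h₂⟩ <;> constructor <;> linarith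

end Bounds

/-- Case 1: for `0 ≤ q < p ≤ 1` and `δ ∈ [0,1)` with
`(p-q)/(1-δ) < 1` and `(q-δp)/(1-δ) < 1`, the menu
`{((0,0),0), ((1,1),p), ((1,δ),q)}` has revenue at most `59/108`, with
equality exactly when `δ = 0`, `q = 2/3` and `p = 5/6`. -/
theorem case1_three_menu (p q δ : ℝ)
    (hq0 : 0 ≤ q) (hqp : q < p) (hp1 : p ≤ 1)
    (hδ0 : 0 ≤ δ) (hδ1 : δ < 1)
    (hA : (p - q) / (1 - δ) < 1)
    (hB : (q - δ * p) / (1 - δ) < 1) :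
    rev {(((0 : ℝ), (0 : ℝ)), (0 : ℝ)),
         (((1 : ℝ), (1 : ℝ)), p),
         (((1 : ℝ), δ), q)} ≤ 59 / 108 ∧
    (rev {(((0 : ℝ), (0 : ℝ)), (0 : ℝ)),
          (((1 : ℝ), (1 : ℝ)), p),
          (((1 : ℝ), δ), q)} = 59 / 108 ↔ δ = 0 ∧ q = 2 / 3 ∧ p = 5 / 6) := by
  have hδ : 0 < 1 - δ := sub_pos.mpr hδ1
  obtain ⟨a, ha⟩ : ∃ a, a * (1 - δ) = p - q := ⟨_, div_mul_cancel₀ _ hδ.ne'⟩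
  obtain ⟨b, rfl⟩ : ∃ b, p = a + b := ⟨p - a, by ring⟩
  obtain rfl : q = b + δ * a := by linarith
  have ha0 : 0 < a := pos_of_mul_pos_left (by linarith) hδ.le
  have ha1 : a ≤ 1 := by
    rw [← ha, mul_div_cancel_right₀ _ hδ.ne'] at hA
    exact hA.le
  exact ⟨rev_threeMenu_le ha0.le ha1 hq0 hp1 hδ0 hδ1,
    rev_threeMenu_eq_iff ha0 ha1 hq0 hp1 hδ0 hδ1⟩
end
end
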